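/- arXiv:1803.09687 — 13 statements merged into one kernel-verified Lean document; each statement's English description precedes it below -/
import Mathlib

section
/- Let K ∈ ℝ, N ∈ (1,∞) and let a < b be real numbers; if K > 0 assume additionally that b − a ≤ π·√((N−1)/K). Let h be an MCP(K,N) density on (a,b). Then for all x₀, x₁ with a < x₀ ≤ x₁ < b the following two inequalities hold: h(x₁)·(s_{K/(N−1)}(b − x₀))^{N−1} ≥ h(x₀)·(s_{K/(N−1)}(b − x₁))^{N−1}, and h(x₀)·(s_{K/(N−1)}(x₁ − a))^{N−1} ≥ h(x₁)·(s_{K/(N−1)}(x₀ − a))^{N−1}. -/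
open Real MeasureTheory ENNReal

/-- The finite part of the distortion coefficient `σ_{K,N}^{(t)}(θ)`. -/
noncomputable def sigmaR (K N t θ : ℝ) : ℝ :=
  if 0 < K * θ ^ 2 then
    Real.sin (t * θ * Real.sqrt (K / N)) / Real.sin (θ * Real.sqrt (K / N))
  else if K * θ ^ 2 = 0 ∨ N = 0 then t
  else Real.sinh (t * θ * Real.sqrt (-K / N)) / Real.sinh (θ * Real.sqrt (-K / N))

/-- The distortion coefficient `σ_{K,N}^{(t)}(θ)`, with value `+∞` when `K·θ² ≥ N·π²`. -/
noncomputable def sigmaE (K N t θ : ℝ) : ℝ≥0∞ :=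
  if N * Real.pi ^ 2 ≤ K * θ ^ 2 then ⊤ else ENNReal.ofReal (sigmaR K N t θ)

/-- `h` is an `MCP(K,N)` density on the interval `I ⊆ ℝ`:  `h` is nonnegative on `I` and
`h(t·x₁ + (1−t)·x₀) ≥ (σ_{K,N−1}^{(1−t)}(|x₁ − x₀|))^{N−1} · h(x₀)` for all `x₀, x₁ ∈ I`,
`t ∈ [0,1]`.  The inequality is formulated in `ℝ≥0∞` so that an infinite coefficient forces
`h(x₀) = 0`. -/
def IsMCPDensity (K N : ℝ) (I : Set ℝ) (h : ℝ → ℝ) : Prop :=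
  (∀ x ∈ I, 0 ≤ h x) ∧
  ∀ x₀ ∈ I, ∀ x₁ ∈ I, ∀ t ∈ Set.Icc (0:ℝ) 1,
    sigmaE K (N - 1) (1 - t) |x₁ - x₀| ^ (N - 1) * ENNReal.ofReal (h x₀)
      ≤ ENNReal.ofReal (h (t * x₁ + (1 - t) * x₀))

/-- The function `s_κ`. -/
noncomputable def sk (κ θ : ℝ) : ℝ :=
  if 0 < κ then Real.sin (Real.sqrt κ * θ) / Real.sqrt κ
  else if κ = 0 then θ
  else Real.sinh (Real.sqrt (-κ) * θ) / Real.sqrt (-κ)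

/-- The derivative `s′_κ` of `s_κ`. -/
noncomputable def sk' (κ θ : ℝ) : ℝ :=
  if 0 < κ then Real.cos (Real.sqrt κ * θ)
  else if κ = 0 then 1
  else Real.cosh (Real.sqrt (-κ) * θ)

lemma sk_cont (κ : ℝ) : Continuous (sk κ) := by
  unfold sk
  split_ifs <;> fun_prop

lemma sk_pos' (κ θ : ℝ) (hθ : 0 < θ) (hk : 0 < κ → Real.sqrt κ * θ < Real.pi) : 0 < sk κ θ := by
  unfold sk
  split_ifs with h1 h2
  · have := Real.sqrt_pos.2 h1
    exact div_pos (Real.sin_pos_of_pos_of_lt_pi (by positivity) (hk h1)) this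
  · exact hθ
  · have h3 : 0 < -κ := by
      rcases lt_trichotomy κ 0 with h | h | h
      · linarith
      · exact absurd h h2
      · exact absurd h h1
    have := Real.sqrt_pos.2 h3
    exact div_pos (Real.sinh_pos_iff.2 (by positivity)) this

lemma sk_zero' (κ : ℝ) : sk κ 0 = 0 := by
  unfold sk
  split_ifs <;> simp

lemma sigmaR_eq (K M t θ : ℝ) (hM : 0 < M) (hθ : 0 < θ) :
    sigmaR K M t θ = sk (K / M) (t * θ) / sk (K / M) θ := by
  have h2 : 0 < θ ^ 2 := by positivity
  unfold sigmaR sk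
  rcases lt_trichotomy K 0 with h | h | h
  · have e1 : ¬ 0 < K * θ ^ 2 := by nlinarith
    have e2 : ¬ (K * θ ^ 2 = 0 ∨ M = 0) := by
      rintro (h' | h')
      · nlinarith
      · linarith
    have e3 : K / M < 0 := div_neg_of_neg_of_pos h hM
    have e4 : 0 < -(K / M) := by linarith
    have e5 := Real.sqrt_pos.2 e4
    rw [if_neg e1, if_neg e2, if_neg (not_lt.2 e3.le), if_neg e3.ne, if_neg (not_lt.2 e3.le),
      if_neg e3.ne, neg_div, div_div_div_cancel_right₀ e5.ne', mul_comm (t * θ), mul_comm θ]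
  · subst h
    simp
    field_simp
  · have e3 : 0 < K / M := div_pos h hM
    have e5 := Real.sqrt_pos.2 e3
    rw [if_pos (by positivity), if_pos e3, if_pos e3, div_div_div_cancel_right₀ e5.ne',
      mul_comm (t * θ), mul_comm θ]

lemma mcp_key (K N a b : ℝ) (hN : 1 < N)
    (hK : 0 < K → b - a ≤ Real.pi * Real.sqrt ((N - 1) / K))
    (h : ℝ → ℝ) (hh : IsMCPDensity K N (Set.Ioo a b) h)
    (x z t : ℝ) (hx : x ∈ Set.Ioo a b) (hz : z ∈ Set.Ioo a b) (hxz : x ≠ z)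
    (ht : t ∈ Set.Icc (0:ℝ) 1) :
    h x * sk (K / (N - 1)) ((1 - t) * |z - x|) ^ (N - 1)
      ≤ h (t * z + (1 - t) * x) * sk (K / (N - 1)) |z - x| ^ (N - 1) := by
  obtain ⟨h0, h1⟩ := hh
  have hM : 0 < N - 1 := by linarith
  have hθ : 0 < |z - x| := abs_pos.2 (sub_ne_zero.2 hxz.symm)
  have hlt : |z - x| < b - a := by
    rw [abs_lt]; constructor <;> linarith [hx.1, hx.2, hz.1, hz.2]
  have key := h1 x hx z hz t ht
  set θ := |z - x| with hθd
  set M := N - 1 with hMd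
  have hpi : 0 < K / M → Real.sqrt (K / M) * θ < Real.pi := by
    intro hk
    have hKp : 0 < K := by
      by_contra hc
      exact absurd hk (not_lt.2 (div_nonpos_of_nonpos_of_nonneg (not_lt.1 hc) hM.le))
    have e := Real.sqrt_pos.2 hk
    have : Real.sqrt (K / M) * Real.sqrt (M / K) = 1 := by
      rw [← Real.sqrt_mul hk.le]
      rw [show K / M * (M / K) = 1 by field_simp]
      simp
    calc _ < Real.sqrt (K / M) * (Real.pi * Real.sqrt (M / K)) :=
          mul_lt_mul_of_pos_left (hlt.trans_le (hK hKp)) e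
      _ = Real.pi * (Real.sqrt (K / M) * Real.sqrt (M / K)) := by ring
      _ = _ := by rw [this, mul_one]
  have hfin : ¬ (M * Real.pi ^ 2 ≤ K * θ ^ 2) := by
    rw [not_le]
    by_cases hk : 0 < K
    · have hkm := div_pos hk hM
      have e1 := hpi hkm
      have e2 := pow_lt_pow_left₀ e1 (by positivity) two_ne_zero
      rw [mul_pow, Real.sq_sqrt hkm.le] at e2
      have := mul_lt_mul_of_pos_left e2 hM
      calc K * θ ^ 2 = M * (K / M * θ ^ 2) := by field_simp
        _ < _ := this
    · have : 0 < M * Real.pi ^ 2 := by positivity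
      have h3 : 0 < θ ^ 2 := by positivity
      nlinarith
  have hsθ := sk_pos' (K / M) θ hθ hpi
  have hs : 0 ≤ sk (K / M) ((1 - t) * θ) := by
    rcases eq_or_lt_of_le (sub_nonneg.2 ht.2) with e | e
    · rw [← e, zero_mul, sk_zero']
    · apply le_of_lt
      apply sk_pos' _ _ (by positivity)
      intro hk
      refine lt_of_le_of_lt ?_ (hpi hk)
      apply mul_le_mul_of_nonneg_left _ (Real.sqrt_nonneg _)
      nlinarith [ht.1]
  have hw : 0 ≤ h (t * z + (1 - t) * x) := by
    apply h0
    have := (convex_Ioo a b) hz hx ht.1 (sub_nonneg.2 ht.2) (by ring)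
    simpa using this
  unfold sigmaE at key
  rw [if_neg hfin, sigmaR_eq K M _ θ hM hθ,
    ENNReal.ofReal_rpow_of_nonneg (by positivity) hM.le,
    ← ENNReal.ofReal_mul (by positivity), ENNReal.ofReal_le_ofReal_iff hw,
    Real.div_rpow hs hsθ.le] at key
  have hp := Real.rpow_pos_of_pos hsθ M
  rw [div_mul_eq_mul_div, div_le_iff₀ hp] at key
  linarith

theorem mcp_density_two_sided_bound
    (K N a b : ℝ) (hN : 1 < N) (hab : a < b)
    (hK : 0 < K → b - a ≤ Real.pi * Real.sqrt ((N - 1) / K))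
    (h : ℝ → ℝ) (hh : IsMCPDensity K N (Set.Ioo a b) h) :
    ∀ x₀ x₁ : ℝ, a < x₀ → x₀ ≤ x₁ → x₁ < b →
      h x₀ * sk (K / (N - 1)) (b - x₁) ^ (N - 1)
          ≤ h x₁ * sk (K / (N - 1)) (b - x₀) ^ (N - 1) ∧
      h x₁ * sk (K / (N - 1)) (x₀ - a) ^ (N - 1)
          ≤ h x₀ * sk (K / (N - 1)) (x₁ - a) ^ (N - 1) := by
  intro x₀ x₁ h0 h01 h1
  have hM : 0 ≤ N - 1 := by linarith
  have hc := sk_cont (K / (N - 1))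
  constructor
  · have c1 : ∀ u y : ℝ, Continuous fun c => u * sk (K / (N - 1)) (c - y) ^ (N - 1) := fun u y =>
      continuous_const.mul ((hc.comp (continuous_id.sub continuous_const)).rpow_const
        (fun _ => Or.inr hM))
    refine le_of_tendsto_of_tendsto (b := nhdsWithin b (Set.Iio b))
      ((c1 (h x₀) x₁).continuousWithinAt) ((c1 (h x₁) x₀).continuousWithinAt) ?_
    filter_upwards [Ioo_mem_nhdsLT h1] with c hc'
    have hp : 0 < c - x₀ := by linarith [hc'.1]
    have := mcp_key K N a b hN hK h hh x₀ c ((x₁ - x₀) / (c - x₀)) ⟨h0, by linarith⟩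
      ⟨by linarith, hc'.2⟩ (by linarith)
      ⟨div_nonneg (by linarith) hp.le, (div_le_one hp).2 (by linarith [hc'.1])⟩
    rw [abs_of_pos hp] at this
    rwa [show (1 - (x₁ - x₀) / (c - x₀)) * (c - x₀) = c - x₁ by field_simp; ring,
      show (x₁ - x₀) / (c - x₀) * c + (1 - (x₁ - x₀) / (c - x₀)) * x₀ = x₁ by
        field_simp; ring] at this
  · have c1 : ∀ u y : ℝ, Continuous fun c => u * sk (K / (N - 1)) (y - c) ^ (N - 1) := fun u y =>
      continuous_const.mul ((hc.comp (continuous_const.sub continuous_id)).rpow_const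
        (fun _ => Or.inr hM))
    refine le_of_tendsto_of_tendsto (b := nhdsWithin a (Set.Ioi a))
      ((c1 (h x₁) x₀).continuousWithinAt) ((c1 (h x₀) x₁).continuousWithinAt) ?_
    filter_upwards [Ioo_mem_nhdsGT h0] with c hc'
    have hp : 0 < x₁ - c := by linarith [hc'.2]
    have := mcp_key K N a b hN hK h hh x₁ c ((x₁ - x₀) / (x₁ - c)) ⟨by linarith, h1⟩
      ⟨hc'.1, by linarith [hc'.2]⟩ (by linarith)
      ⟨div_nonneg (by linarith) hp.le, (div_le_one hp).2 (by linarith [hc'.2])⟩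
    rw [abs_sub_comm, abs_of_pos hp] at this
    rwa [show (1 - (x₁ - x₀) / (x₁ - c)) * (x₁ - c) = x₀ - c by field_simp; ring,
      show (x₁ - x₀) / (x₁ - c) * c + (1 - (x₁ - x₀) / (x₁ - c)) * x₁ = x₀ by
        field_simp; ring] at this
end

section
/- For every K ∈ ℝ, N ∈ (1,∞) and ε > 0 there exists a constant C_ε > 0, depending only on K, N and ε, with the following property: for every interval (a,b) with 2ε ≤ b − a ≤ 1/ε (and, if K > 0, with b − a ≤ π·√((N−1)/K)) and every MCP(K,N) density h on (a,b), one has h(x₁) ≤ C_ε·h(x₀) for all x₀, x₁ ∈ [a + ε, b − ε]. -/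
open Real MeasureTheory ENNReal

lemma sigmaE_lower (K M : ℝ) (hM : 0 < M) (ε : ℝ) (hε : 0 < ε) :
    ∃ c > (0:ℝ), ∀ θ : ℝ, ε / 2 ≤ θ → θ ≤ 1 / ε →
      ENNReal.ofReal c ≤ sigmaE K M (ε / 2 / θ) θ := by
  rcases lt_trichotomy K 0 with hK | hK | hK
  · have hk : 0 < Real.sqrt (-K / M) := Real.sqrt_pos.2 (div_pos (by linarith) hM)
    set k := Real.sqrt (-K / M) with hkd
    refine ⟨Real.sinh (ε / 2 * k) / Real.sinh (1 / ε * k), ?_, ?_⟩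
    · exact div_pos (Real.sinh_pos_iff.2 (by positivity)) (Real.sinh_pos_iff.2 (by positivity))
    · intro θ h1 h2
      have hθ : 0 < θ := by linarith
      have hneg : K * θ ^ 2 < 0 := mul_neg_of_neg_of_pos hK (by positivity)
      unfold sigmaE
      split_ifs with h
      · exact le_top
      · apply ENNReal.ofReal_le_ofReal
        unfold sigmaR
        rw [if_neg (by linarith), if_neg (by rintro (h | h) <;> linarith), ← hkd,
          div_mul_cancel₀ _ hθ.ne']
        have : 0 < Real.sinh (θ * k) := Real.sinh_pos_iff.2 (by positivity)
        have h3 : Real.sinh (θ * k) ≤ Real.sinh (1 / ε * k) :=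
          Real.sinh_le_sinh.2 (by gcongr)
        have h4 : 0 < Real.sinh (ε / 2 * k) := Real.sinh_pos_iff.2 (by positivity)
        gcongr
  · subst hK
    refine ⟨ε / 2 / (1 / ε), by positivity, ?_⟩
    intro θ h1 h2
    have hθ : 0 < θ := by linarith
    unfold sigmaE
    split_ifs with h
    · exact le_top
    · apply ENNReal.ofReal_le_ofReal
      unfold sigmaR
      rw [if_neg (by simp), if_pos (by simp)]
      gcongr
  · have hk : 0 < Real.sqrt (K / M) := Real.sqrt_pos.2 (div_pos hK hM)
    have hk2 : Real.sqrt (K / M) ^ 2 = K / M := Real.sq_sqrt (by positivity)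
    set k := Real.sqrt (K / M) with hkd
    have key : ∀ θ : ℝ, 0 < θ → ¬ (M * Real.pi ^ 2 ≤ K * θ ^ 2) → θ * k < Real.pi := by
      intro θ hθ h
      apply lt_of_pow_lt_pow_left₀ 2 Real.pi_pos.le
      rw [mul_pow, hk2, ← mul_div_assoc, div_lt_iff₀ hM]
      linarith
    by_cases hs : 0 < Real.sin (ε / 2 * k)
    · refine ⟨Real.sin (ε / 2 * k), hs, ?_⟩
      intro θ h1 h2
      have hθ : 0 < θ := by linarith
      unfold sigmaE
      split_ifs with h
      · exact le_top
      · apply ENNReal.ofReal_le_ofReal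
        unfold sigmaR
        rw [if_pos (by positivity), ← hkd, div_mul_cancel₀ _ hθ.ne']
        have h3 : 0 < Real.sin (θ * k) :=
          Real.sin_pos_of_pos_of_lt_pi (by positivity) (key θ hθ h)
        rw [le_div_iff₀ h3]
        nlinarith [Real.sin_le_one (θ * k)]
    · refine ⟨1, one_pos, ?_⟩
      intro θ h1 h2
      have hθ : 0 < θ := by linarith
      unfold sigmaE
      split_ifs with h
      · exact le_top
      · exfalso
        apply hs
        apply Real.sin_pos_of_pos_of_lt_pi (by positivity)
        have := key θ hθ h
        nlinarith

theorem mcp_density_uniform_ratio_bound (K N : ℝ) (hN : 1 < N) (ε : ℝ) (hε : 0 < ε) :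
    ∃ C > (0:ℝ), ∀ a b : ℝ, 2 * ε ≤ b - a → b - a ≤ 1 / ε →
      (0 < K → b - a ≤ Real.pi * Real.sqrt ((N - 1) / K)) →
      ∀ h : ℝ → ℝ, IsMCPDensity K N (Set.Ioo a b) h →
      ∀ x₀ ∈ Set.Icc (a + ε) (b - ε), ∀ x₁ ∈ Set.Icc (a + ε) (b - ε),
        h x₁ ≤ C * h x₀ := by
  obtain ⟨c, hc, hcb⟩ := sigmaE_lower K (N - 1) (by linarith) ε hε
  have hcp : 0 < c ^ (N - 1) := Real.rpow_pos_of_pos hc _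
  refine ⟨(c ^ (N - 1))⁻¹, by positivity, ?_⟩
  intro a b _ hab2 _ h hh x₀ hx₀ x₁ hx₁
  obtain ⟨hx0l, hx0r⟩ := hx₀
  obtain ⟨hx1l, hx1r⟩ := hx₁
  obtain ⟨hnn, hm⟩ := hh
  have main : ∀ y ∈ Set.Ioo a b, |y - x₁| = |x₀ - x₁| + ε / 2 →
      (|x₀ - x₁| / |y - x₁|) * (y - x₁) = x₀ - x₁ → h x₁ ≤ (c ^ (N - 1))⁻¹ * h x₀ := by
    intro y hy hθ hp
    have h0 := abs_nonneg (x₀ - x₁)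
    have hd : |x₀ - x₁| ≤ b - a - 2 * ε := abs_le.2 ⟨by linarith, by linarith⟩
    have hθp : 0 < |y - x₁| := by linarith
    have ht : 1 - |x₀ - x₁| / |y - x₁| = ε / 2 / |y - x₁| := by
      rw [eq_div_iff hθp.ne', sub_mul, div_mul_cancel₀ _ hθp.ne']; linarith
    have h1 := hm x₁ ⟨by linarith, by linarith⟩ y hy (|x₀ - x₁| / |y - x₁|)
      ⟨by positivity, by rw [div_le_one hθp]; linarith⟩
    have hpt : |x₀ - x₁| / |y - x₁| * y + (1 - |x₀ - x₁| / |y - x₁|) * x₁ = x₀ := by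
      linear_combination hp
    rw [hpt, ht] at h1
    have h2 := hcb |y - x₁| (by linarith) (by linarith)
    have h3 : ENNReal.ofReal (c ^ (N - 1) * h x₁) ≤ ENNReal.ofReal (h x₀) := by
      rw [ENNReal.ofReal_mul hcp.le, ← ENNReal.ofReal_rpow_of_pos hc]
      refine le_trans ?_ h1
      have : 0 ≤ N - 1 := by linarith
      gcongr
    rw [ENNReal.ofReal_le_ofReal_iff (hnn x₀ ⟨by linarith, by linarith⟩)] at h3
    rw [inv_mul_eq_div, le_div_iff₀ hcp]
    linarith
  rcases le_total x₁ x₀ with hle | hle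
  · have e1 : |x₀ - x₁| = x₀ - x₁ := abs_of_nonneg (by linarith)
    have e2 : |x₀ + ε / 2 - x₁| = x₀ + ε / 2 - x₁ := abs_of_nonneg (by linarith)
    refine main (x₀ + ε / 2) ⟨by linarith, by linarith⟩ (by rw [e1, e2]; ring) ?_
    rw [e1, e2, div_mul_cancel₀ _ (by linarith)]
  · have e1 : |x₀ - x₁| = -(x₀ - x₁) := abs_of_nonpos (by linarith)
    have e2 : |x₀ - ε / 2 - x₁| = -(x₀ - ε / 2 - x₁) := abs_of_nonpos (by linarith)
    refine main (x₀ - ε / 2) ⟨by linarith, by linarith⟩ (by rw [e1, e2]; ring) ?_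
    rw [e1, e2, neg_div_neg_eq, div_mul_cancel₀ _ (by linarith)]
end

section
/- Let K ∈ ℝ, N ∈ (1,∞) and let a < b be real numbers; if K > 0 assume additionally that b − a ≤ π·√((N−1)/K). Then every MCP(K,N) density h on (a,b) is locally Lipschitz on (a,b): every point of (a,b) has a neighborhood on which h is Lipschitz. -/
open Real MeasureTheory ENNReal

theorem mcp_exists_s (K c R : ℝ) (hc : 0 < c)
    (hK : 0 < K → R ≤ Real.pi * Real.sqrt (c / K)) :
    ∃ s : ℝ → ℝ, ContDiff ℝ 1 s ∧ (∀ θ, 0 < θ → θ < R → 0 < s θ) ∧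
      ∀ t θ, 0 < θ → θ < R → sigmaE K c t θ = ENNReal.ofReal (s (t * θ) / s θ) := by
  rcases lt_trichotomy K 0 with hK0 | hK0 | hK0
  · have hp : 0 < Real.sqrt (-K / c) := Real.sqrt_pos.2 (div_pos (by linarith) hc)
    refine ⟨fun θ => Real.sinh (θ * Real.sqrt (-K / c)), by fun_prop, ?_, ?_⟩
    · intro θ h0 _
      exact Real.sinh_pos_iff.2 (mul_pos h0 hp)
    · intro t θ h0 _
      have h2 : K * θ ^ 2 < 0 := mul_neg_of_neg_of_pos hK0 (by positivity)
      have h3 : 0 < c * Real.pi ^ 2 := by positivity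
      rw [sigmaE, if_neg (by linarith), sigmaR, if_neg (by linarith), if_neg]
      rintro (h | h) <;> linarith
  · subst hK0
    refine ⟨fun θ => θ, by fun_prop, fun _ h _ => h, ?_⟩
    intro t θ h0 _
    have h3 : 0 < c * Real.pi ^ 2 := by positivity
    rw [sigmaE, if_neg (by linarith), sigmaR, if_neg (by linarith), if_pos (by simp)]
    congr 1
    field_simp
  · have hp : 0 < Real.sqrt (K / c) := Real.sqrt_pos.2 (div_pos hK0 hc)
    have hinv : Real.sqrt (c / K) * Real.sqrt (K / c) = 1 := by
      rw [← Real.sqrt_mul (by positivity)]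
      rw [show c / K * (K / c) = 1 by field_simp]
      simp
    have hlt : ∀ θ, 0 < θ → θ < R → θ * Real.sqrt (K / c) < Real.pi := by
      intro θ h0 h1
      calc θ * Real.sqrt (K / c) < (Real.pi * Real.sqrt (c / K)) * Real.sqrt (K / c) :=
            mul_lt_mul_of_pos_right (lt_of_lt_of_le h1 (hK hK0)) hp
        _ = Real.pi := by rw [mul_assoc, hinv, mul_one]
    refine ⟨fun θ => Real.sin (θ * Real.sqrt (K / c)), by fun_prop, ?_, ?_⟩
    · intro θ h0 h1
      exact Real.sin_pos_of_pos_of_lt_pi (mul_pos h0 hp) (hlt θ h0 h1)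
    · intro t θ h0 h1
      have h2 : 0 < K * θ ^ 2 := by positivity
      have h3 : (θ * Real.sqrt (K / c)) ^ 2 < Real.pi ^ 2 :=
        pow_lt_pow_left₀ (hlt θ h0 h1) (by positivity) (by norm_num)
      rw [mul_pow, Real.sq_sqrt (by positivity)] at h3
      have h4 : K * θ ^ 2 < c * Real.pi ^ 2 := by
        have := mul_lt_mul_of_pos_left h3 hc
        have e : c * (θ ^ 2 * (K / c)) = K * θ ^ 2 := by field_simp
        linarith
      rw [sigmaE, if_neg (by linarith), sigmaR, if_pos h2]

theorem mcp_ineq (K N a b : ℝ) (h : ℝ → ℝ) (hh : IsMCPDensity K N (Set.Ioo a b) h)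
    (s : ℝ → ℝ) (hs : ∀ θ, 0 < θ → θ < b - a → 0 < s θ)
    (hσ : ∀ t θ, 0 < θ → θ < b - a →
      sigmaE K (N - 1) t θ = ENNReal.ofReal (s (t * θ) / s θ))
    (x₀ x₁ y t : ℝ) (h0 : x₀ ∈ Set.Ioo a b) (h1 : x₁ ∈ Set.Ioo a b) (hne : x₀ ≠ x₁)
    (ht0 : 0 ≤ t) (ht1 : t < 1) (hy : t * x₁ + (1 - t) * x₀ = y) :
    s |x₁ - y| ^ (N - 1) * h x₀ ≤ s |x₁ - x₀| ^ (N - 1) * h y := by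
  have hd : 0 < |x₁ - x₀| := abs_pos.2 (sub_ne_zero.2 hne.symm)
  have hd' : |x₁ - x₀| < b - a := by
    rw [abs_lt]; constructor <;> linarith [h0.1, h0.2, h1.1, h1.2]
  have e : (1 - t) * |x₁ - x₀| = |x₁ - y| := by
    rw [← hy, ← abs_of_pos (show 0 < 1 - t by linarith), ← abs_mul,
      abs_of_pos (show 0 < 1 - t by linarith)]
    congr 1; ring
  have hd1 : 0 < |x₁ - y| := by rw [← e]; exact mul_pos (by linarith) hd
  have hd2 : |x₁ - y| < b - a := by rw [← e]; nlinarith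
  have hyI : y ∈ Set.Ioo a b := by
    have := (convex_Ioo a b) h1 h0 ht0 (show 0 ≤ 1 - t by linarith) (by ring)
    simpa [hy] using this
  have key := hh.2 x₀ h0 x₁ h1 t ⟨ht0, ht1.le⟩
  have p1 := hs _ hd hd'
  have p2 := hs _ hd1 hd2
  rw [hσ _ _ hd hd', e, hy, ENNReal.ofReal_rpow_of_pos (div_pos p2 p1),
    ← ENNReal.ofReal_mul (by positivity), ENNReal.ofReal_le_ofReal_iff (hh.1 y hyI),
    Real.div_rpow p2.le p1.le, div_mul_eq_mul_div, div_le_iff₀ (by positivity)] at key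
  linarith

theorem mcp_abstract (x : ℝ) (h u v : ℝ → ℝ) (hu : ContDiffAt ℝ 1 u x)
    (hv : ContDiffAt ℝ 1 v x) (hux : 0 < u x) (hvx : 0 < v x) (S : Set ℝ) (hS : S ∈ nhds x)
    (hpos : ∀ y ∈ S, 0 ≤ h y)
    (H1 : ∀ y ∈ S, ∀ z ∈ S, y ≤ z → u z * h y ≤ u y * h z)
    (H2 : ∀ y ∈ S, ∀ z ∈ S, y ≤ z → v y * h z ≤ v z * h y) :
    ∃ r > (0:ℝ), Metric.ball x r ⊆ S ∧
      ∃ L : NNReal, LipschitzOnWith L h (Metric.ball x r) := by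
  obtain ⟨Lu, su, hsu, hLu⟩ := hu.exists_lipschitzOnWith
  obtain ⟨Lv, sv, hsv, hLv⟩ := hv.exists_lipschitzOnWith
  have eu : ∀ᶠ y in nhds x, u x / 2 < u y ∧ u y < 2 * u x :=
    (hu.continuousAt.eventually (lt_mem_nhds (by linarith))).and
      (hu.continuousAt.eventually (gt_mem_nhds (by linarith)))
  have ev : ∀ᶠ y in nhds x, v x / 2 < v y ∧ v y < 2 * v x :=
    (hv.continuousAt.eventually (lt_mem_nhds (by linarith))).and
      (hv.continuousAt.eventually (gt_mem_nhds (by linarith)))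
  have hall : ∀ᶠ y in nhds x, y ∈ S ∧ y ∈ su ∧ y ∈ sv ∧ (u x / 2 < u y ∧ u y < 2 * u x) ∧
      (v x / 2 < v y ∧ v y < 2 * v x) := by
    filter_upwards [hS, hsu, hsv, eu, ev] with y a1 a2 a3 a4 a5
    exact ⟨a1, a2, a3, a4, a5⟩
  obtain ⟨r, hr, hB⟩ := Metric.eventually_nhds_iff_ball.1 hall
  have hxB : x ∈ Metric.ball x r := Metric.mem_ball_self hr
  have hxS := (hB x hxB).1
  have hbd : ∀ y ∈ Metric.ball x r, h y ≤ 2 * h x := by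
    intro y hy
    obtain ⟨a1, -, -, ⟨a4, a4'⟩, a5, a5'⟩ := hB y hy
    have hx0 := hpos x hxS
    have hy0 := hpos y a1
    rcases le_total y x with hyx | hyx
    · have := H1 y a1 x hxS hyx
      have h3 : u x * h y ≤ u x * (2 * h x) := by nlinarith
      exact le_of_mul_le_mul_left h3 hux
    · have := H2 x hxS y a1 hyx
      have h3 : v x * h y ≤ v x * (2 * h x) := by nlinarith
      exact le_of_mul_le_mul_left h3 hvx
  have hx0 := hpos x hxS
  set C : ℝ := 4 * h x * Lu / u x + 4 * h x * Lv / v x with hC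
  have hCu : 0 ≤ 4 * h x * Lu / u x := by positivity
  have hCv : 0 ≤ 4 * h x * Lv / v x := by positivity
  have step : ∀ (w : ℝ → ℝ) (L : NNReal) (y z A B : ℝ), 0 < w x → |w y - w z| ≤ L * |y - z| →
      w x / 2 < w z → 0 ≤ B → B ≤ 2 * h x → w z * A ≤ w y * B →
      A - B ≤ 4 * h x * L / w x * |y - z| := by
    intro w L y z A B hw hl hz hB0 hBx hAB
    rw [div_mul_eq_mul_div, le_div_iff₀ hw]
    by_cases hAB' : A ≤ B
    · have : 0 ≤ 4 * h x * L * |y - z| := by positivity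
      nlinarith
    push Not at hAB'
    have h1 : w z * (A - B) ≤ |w y - w z| * B := by nlinarith [le_abs_self (w y - w z)]
    have h2 : |w y - w z| * B ≤ L * |y - z| * (2 * h x) :=
      mul_le_mul hl hBx hB0 (by positivity)
    nlinarith
  have main : ∀ y ∈ Metric.ball x r, ∀ z ∈ Metric.ball x r, y ≤ z →
      |h y - h z| ≤ C * |y - z| := by
    intro y hy z hz hyz
    obtain ⟨b1, b2, b3, ⟨b4, b4'⟩, b5, b5'⟩ := hB y hy
    obtain ⟨c1, c2, c3, ⟨c4, c4'⟩, c5, c5'⟩ := hB z hz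
    have l1 := hLu.dist_le_mul y b2 z c2
    have l2 := hLv.dist_le_mul z c3 y b3
    rw [Real.dist_eq, Real.dist_eq] at l1 l2
    have s1 := step u Lu y z (h y) (h z) hux l1 c4 (hpos z c1) (hbd z hz) (H1 y b1 z c1 hyz)
    have s2 := step v Lv z y (h z) (h y) hvx l2 b5 (hpos y b1) (hbd y hy) (H2 y b1 z c1 hyz)
    rw [abs_sub_comm z y] at s2
    have n1 := mul_nonneg hCu (abs_nonneg (y - z))
    have n2 := mul_nonneg hCv (abs_nonneg (y - z))
    rw [abs_le, hC, add_mul]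
    constructor <;> linarith
  refine ⟨r, hr, fun y hy => (hB y hy).1, C.toNNReal, LipschitzOnWith.of_dist_le_mul ?_⟩
  intro y hy z hz
  rw [Real.dist_eq, Real.dist_eq, Real.coe_toNNReal _ (by rw [hC]; linarith)]
  rcases le_total y z with hyz | hyz
  · exact main y hy z hz hyz
  · rw [abs_sub_comm (h y), abs_sub_comm y]
    exact main z hz y hy hyz

theorem mcp_density_locallyLipschitz
    (K N a b : ℝ) (hN : 1 < N) (hab : a < b)
    (hK : 0 < K → b - a ≤ Real.pi * Real.sqrt ((N - 1) / K))
    (h : ℝ → ℝ) (hh : IsMCPDensity K N (Set.Ioo a b) h) :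
    ∀ x ∈ Set.Ioo a b, ∃ r > (0:ℝ), Metric.ball x r ⊆ Set.Ioo a b ∧
      ∃ L : NNReal, LipschitzOnWith L h (Metric.ball x r) := by
  intro x hx
  obtain ⟨s, hsC, hs, hσ⟩ := mcp_exists_s K (N - 1) (b - a) (by linarith) hK
  have ineq := mcp_ineq K N a b h hh s hs hσ
  obtain ⟨p, hp1, hp2⟩ := exists_between hx.1
  obtain ⟨q, hq1, hq2⟩ := exists_between hx.2
  have hpI : p ∈ Set.Ioo a b := ⟨hp1, by linarith⟩
  have hqI : q ∈ Set.Ioo a b := ⟨by linarith, hq2⟩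
  have hsub : Set.Ioo p q ⊆ Set.Ioo a b := Set.Ioo_subset_Ioo hp1.le hq2.le
  have squ : 0 < s (q - x) := hs _ (by linarith) (by linarith)
  have spu : 0 < s (x - p) := hs _ (by linarith) (by linarith)
  obtain ⟨r, hr, hrS, L, hL⟩ := mcp_abstract x h (fun y => s (q - y) ^ (N - 1))
    (fun y => s (y - p) ^ (N - 1))
    (ContDiffAt.rpow_const_of_ne (ContDiff.contDiffAt (by fun_prop)) squ.ne')
    (ContDiffAt.rpow_const_of_ne (ContDiff.contDiffAt (by fun_prop)) spu.ne')
    (by positivity) (by positivity) (Set.Ioo p q) (Ioo_mem_nhds hp2 hq1)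
    (fun y hy => hh.1 y (hsub hy))
    (by
      intro y hy z hz hyz
      have hy2 := hy.2
      have hz2 := hz.2
      have hqy : 0 < q - y := by linarith
      have := ineq y q z ((z - y) / (q - y)) (hsub hy) hqI hy2.ne
        (div_nonneg (by linarith) hqy.le) ((div_lt_one hqy).2 (by linarith))
        (by field_simp; ring)
      rwa [abs_of_pos hqy, abs_of_pos (by linarith)] at this)
    (by
      intro y hy z hz hyz
      have hy2 := hy.1
      have hz2 := hz.1
      have hqy : 0 < z - p := by linarith
      have := ineq z p y ((z - y) / (z - p)) (hsub hz) hpI hz2.ne'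
        (div_nonneg (by linarith) hqy.le) ((div_lt_one hqy).2 (by linarith))
        (by field_simp; ring)
      rwa [abs_sub_comm p z, abs_sub_comm p y, abs_of_pos hqy, abs_of_pos (by linarith)] at this)
  exact ⟨r, hr, hrS.trans hsub, L, hL⟩
end

section
/- Let K ∈ ℝ, N ∈ (1,∞) and let a < b be real numbers; if K > 0 assume additionally that b − a ≤ π·√((N−1)/K). Let h be an MCP(K,N) density on (a,b) and let x ∈ (a,b) be a point where h is differentiable, with derivative h′(x). Then −(N−1)·(s′_{K/(N−1)}(b − x)/s_{K/(N−1)}(b − x))·h(x) ≤ h′(x) ≤ (N−1)·(s′_{K/(N−1)}(x − a)/s_{K/(N−1)}(x − a))·h(x). -/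
open Real MeasureTheory ENNReal

theorem aux_sk_deriv (κ θ : ℝ) : HasDerivAt (sk κ) (sk' κ θ) θ := by
  unfold sk sk'
  rcases lt_trichotomy κ 0 with hκ | hκ | hκ
  · have h1 : ¬ 0 < κ := by linarith
    have h2 : κ ≠ 0 := by linarith
    have h3 : 0 < Real.sqrt (-κ) := Real.sqrt_pos.2 (by linarith)
    simp only [h1, h2, if_false]
    have := (((hasDerivAt_id θ).const_mul (Real.sqrt (-κ))).sinh).div_const (Real.sqrt (-κ))
    refine this.congr_deriv ?_
    simp only [id]
    field_simp
  · subst hκ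
    simp only [lt_irrefl, if_false, if_true]
    exact hasDerivAt_id θ
  · have h3 : 0 < Real.sqrt κ := Real.sqrt_pos.2 hκ
    simp only [hκ, if_true]
    have := (((hasDerivAt_id θ).const_mul (Real.sqrt κ)).sin).div_const (Real.sqrt κ)
    refine this.congr_deriv ?_
    simp only [id]
    field_simp

theorem aux_sk'_cont (κ : ℝ) : Continuous (sk' κ) := by
  unfold sk'
  split_ifs
  · fun_prop
  · fun_prop
  · fun_prop

theorem aux_sqrt (K M θ : ℝ) (hM : 0 < M) (hK : 0 < K)
    (hb : θ < Real.pi * Real.sqrt (M / K)) : Real.sqrt (K / M) * θ < Real.pi := by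
  have h1 : 0 < Real.sqrt (K / M) := Real.sqrt_pos.2 (by positivity)
  have h2 : Real.sqrt (K / M) * Real.sqrt (M / K) = 1 := by
    rw [← Real.sqrt_mul (by positivity)]
    rw [show K / M * (M / K) = 1 by field_simp]
    simp
  calc Real.sqrt (K / M) * θ < Real.sqrt (K / M) * (Real.pi * Real.sqrt (M / K)) := by gcongr
    _ = Real.pi * (Real.sqrt (K / M) * Real.sqrt (M / K)) := by ring
    _ = Real.pi := by rw [h2, mul_one]

theorem aux_sk_pos (K M θ : ℝ) (hM : 0 < M) (hθ : 0 < θ)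
    (hb : 0 < K → θ < Real.pi * Real.sqrt (M / K)) : 0 < sk (K / M) θ := by
  unfold sk
  split_ifs with h1 h2
  · have hK : 0 < K := by
      by_contra hc
      exact absurd h1 (not_lt.2 (div_nonpos_of_nonpos_of_nonneg (not_lt.1 hc) hM.le))
    have h3 : 0 < Real.sqrt (K / M) := Real.sqrt_pos.2 h1
    exact div_pos (Real.sin_pos_of_pos_of_lt_pi (by positivity)
      (aux_sqrt K M θ hM hK (hb hK))) h3
  · exact hθ
  · have h3 : 0 < Real.sqrt (-(K / M)) := by
      apply Real.sqrt_pos.2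
      have := lt_of_le_of_ne (not_lt.1 h1) h2
      linarith
    exact div_pos (Real.sinh_pos_iff.2 (by positivity)) h3

theorem aux_sigma (K M t θ : ℝ) (hM : 0 < M) (hθ : 0 < θ)
    (hb : 0 < K → θ < Real.pi * Real.sqrt (M / K)) :
    sigmaE K M t θ = ENNReal.ofReal (sk (K / M) (t * θ) / sk (K / M) θ) := by
  have hfin : ¬ (M * Real.pi ^ 2 ≤ K * θ ^ 2) := by
    rw [not_le]
    rcases le_or_gt K 0 with hK | hK
    · have : K * θ ^ 2 ≤ 0 := mul_nonpos_of_nonpos_of_nonneg hK (by positivity)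
      have : 0 < M * Real.pi ^ 2 := by positivity
      linarith
    · have h1 := aux_sqrt K M θ hM hK (hb hK)
      have h2 : (Real.sqrt (K / M) * θ) ^ 2 < Real.pi ^ 2 := by gcongr
      rw [mul_pow, Real.sq_sqrt (by positivity)] at h2
      have h3 := mul_lt_mul_of_pos_left h2 hM
      have h4 : M * (K / M * θ ^ 2) = K * θ ^ 2 := by field_simp
      linarith
  unfold sigmaE
  rw [if_neg hfin]
  congr 1
  unfold sigmaR sk
  have hθ2 : 0 < θ ^ 2 := by positivity
  rcases lt_trichotomy K 0 with hK | hK | hK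
  · have h1 : ¬ 0 < K * θ ^ 2 := by nlinarith
    have h2 : ¬ (K * θ ^ 2 = 0 ∨ M = 0) := by
      rintro (h | h)
      · nlinarith
      · linarith
    have h4 : K / M < 0 := div_neg_of_neg_of_pos hK hM
    have h5 : 0 < Real.sqrt (-(K / M)) := Real.sqrt_pos.2 (by linarith)
    rw [if_neg h1, if_neg h2]
    simp only [not_lt.2 h4.le, h4.ne, if_false]
    rw [div_div_div_cancel_right₀ h5.ne', neg_div, mul_comm (t * θ), mul_comm θ (Real.sqrt _)]
  · subst hK
    simp [hθ.ne']
  · have h1 : 0 < K * θ ^ 2 := by positivity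
    have h4 : 0 < K / M := by positivity
    have h5 : 0 < Real.sqrt (K / M) := Real.sqrt_pos.2 h4
    simp only [h1, h4, if_true]
    rw [div_div_div_cancel_right₀ h5.ne', mul_comm (t * θ), mul_comm θ (Real.sqrt _)]

theorem aux_deriv_nonneg (F : ℝ → ℝ) (F' : ℝ) (hF : HasDerivAt F F' 0) (h0 : F 0 = 0)
    (hpos : ∀ t, 0 < t → t < 1 → 0 ≤ F t) : 0 ≤ F' := by
  have h1 : Filter.Tendsto (slope F 0) (nhdsWithin 0 (Set.Ioi 0)) (nhds F') :=
    (hasDerivAt_iff_tendsto_slope.1 hF).mono_left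
      (nhdsWithin_mono _ (fun y hy => (ne_of_gt hy)))
  refine ge_of_tendsto h1 ?_
  filter_upwards [Ioo_mem_nhdsGT (zero_lt_one (α := ℝ))] with t ht
  rw [slope_def_field, h0]
  have := hpos t ht.1 ht.2
  have := ht.1
  simp only [sub_zero]
  positivity

theorem aux_main (K M a b : ℝ) (hM : 0 < M)
    (hK : 0 < K → b - a ≤ Real.pi * Real.sqrt (M / K))
    (h : ℝ → ℝ) (hh : IsMCPDensity K (M + 1) (Set.Ioo a b) h)
    (x : ℝ) (hx : x ∈ Set.Ioo a b) (h' : ℝ) (hderiv : HasDerivAt h h' x)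
    (c : ℝ) (hc : c ∈ Set.Ioo a b) (hcx : c ≠ x) :
    0 ≤ h' * (c - x) + M * (sk' (K / M) |c - x| / sk (K / M) |c - x|) * h x * |c - x| := by
  set θ := |c - x| with hθd
  have hθ : 0 < θ := abs_pos.2 (sub_ne_zero.2 hcx)
  have hθb : θ < b - a := by
    rw [hθd, abs_lt]
    constructor <;> linarith [hx.1, hx.2, hc.1, hc.2]
  have hb : ∀ y ≤ θ, 0 < K → y < Real.pi * Real.sqrt (M / K) := fun y hy hKp => by
    linarith [hK hKp]
  have hS := aux_sk_pos K M θ hM hθ (hb θ le_rfl)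
  have hx0 := hh.1 x hx
  have hg : HasDerivAt (fun t : ℝ => sk (K / M) ((1 - t) * θ) / sk (K / M) θ)
      (sk' (K / M) θ * (-θ) / sk (K / M) θ) 0 := by
    have h1 : HasDerivAt (fun t : ℝ => (1 - t) * θ) (-θ) 0 := by
      simpa using ((hasDerivAt_id (0:ℝ)).const_sub 1).mul_const θ
    have h2 : HasDerivAt (sk (K / M)) (sk' (K / M) θ) ((1 - 0) * θ) := by
      simpa using aux_sk_deriv (K / M) θ
    exact (HasDerivAt.comp (0:ℝ) h2 h1).div_const _
  have hg0 : sk (K / M) ((1 - 0) * θ) / sk (K / M) θ = 1 := by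
    simp [hS.ne']
  have hgM := (hg.rpow_const (p := M) (Or.inl (by simp only [hg0]; norm_num))).mul_const (h x)
  have hφ : HasDerivAt (fun t : ℝ => h (t * c + (1 - t) * x)) (h' * (c - x)) 0 := by
    have h1 : HasDerivAt (fun t : ℝ => t * c + (1 - t) * x) (c - x) 0 := by
      have := ((hasDerivAt_id (0:ℝ)).mul_const c).add
        (((hasDerivAt_id (0:ℝ)).const_sub 1).mul_const x)
      refine this.congr_deriv ?_
      ring
    have h2 : HasDerivAt h h' (0 * c + (1 - 0) * x) := by simpa using hderiv
    exact HasDerivAt.comp (0:ℝ) h2 h1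
  have key := aux_deriv_nonneg _ _ (hφ.sub hgM) (by
    simp [hS.ne']) (by
    intro t ht0 ht1
    have h1 := hh.2 x hx c hc t ⟨ht0.le, ht1.le⟩
    rw [show M + 1 - 1 = M by ring, ← hθd, aux_sigma K M (1 - t) θ hM hθ (hb θ le_rfl)] at h1
    have h2 : 0 < (1 - t) * θ := mul_pos (by linarith) hθ
    have h3 := aux_sk_pos K M ((1 - t) * θ) hM h2 (hb _ (by nlinarith))
    have h4 : 0 ≤ sk (K / M) ((1 - t) * θ) / sk (K / M) θ := by positivity
    rw [ENNReal.ofReal_rpow_of_nonneg h4 hM.le, ← ENNReal.ofReal_mul (by positivity)] at h1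
    have hy : t * c + (1 - t) * x ∈ Set.Ioo a b := by
      have := (convex_Ioo a b) hc hx ht0.le (by linarith : 0 ≤ 1 - t) (by ring)
      simpa using this
    rw [ENNReal.ofReal_le_ofReal_iff (hh.1 _ hy)] at h1
    simpa using h1)
  rw [hg0, Real.one_rpow] at key
  calc (0:ℝ) ≤ _ := key
    _ = _ := by ring

theorem mcp_density_deriv_bounds
    (K N a b : ℝ) (hN : 1 < N) (hab : a < b)
    (hK : 0 < K → b - a ≤ Real.pi * Real.sqrt ((N - 1) / K))
    (h : ℝ → ℝ) (hh : IsMCPDensity K N (Set.Ioo a b) h)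
    (x : ℝ) (hx : x ∈ Set.Ioo a b) (h' : ℝ) (hderiv : HasDerivAt h h' x) :
    -(N - 1) * (sk' (K / (N - 1)) (b - x) / sk (K / (N - 1)) (b - x)) * h x ≤ h' ∧
      h' ≤ (N - 1) * (sk' (K / (N - 1)) (x - a) / sk (K / (N - 1)) (x - a)) * h x := by
  have hM : 0 < N - 1 := by linarith
  have hm := aux_main K (N - 1) a b hM hK h (by simpa using hh) x hx h' hderiv
  set κ := K / (N - 1) with hκ
  have hcont : ∀ θ, 0 < θ → θ < b - a →
      ContinuousAt (fun θ => (N - 1) * (sk' κ θ / sk κ θ) * h x) θ := by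
    intro θ h0 h1
    have hp := aux_sk_pos K (N - 1) θ hM h0 (fun hKp => by linarith [hK hKp])
    exact (continuousAt_const.mul (((aux_sk'_cont κ).continuousAt).div
      (aux_sk_deriv κ θ).continuousAt hp.ne')).mul continuousAt_const
  constructor
  · have hc := hcont (b - x) (by linarith [hx.2]) (by linarith [hx.1])
    have ht : Filter.Tendsto (fun c => (N - 1) * (sk' κ (c - x) / sk κ (c - x)) * h x)
        (nhdsWithin b (Set.Iio b)) (nhds ((N - 1) * (sk' κ (b - x) / sk κ (b - x)) * h x)) := by
      have h1 : ContinuousAt (fun c : ℝ => c - x) b := by fun_prop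
      exact (ContinuousAt.comp (f := fun c : ℝ => c - x) hc h1).tendsto.mono_left
        nhdsWithin_le_nhds
    have : -h' ≤ (N - 1) * (sk' κ (b - x) / sk κ (b - x)) * h x := by
      refine ge_of_tendsto ht ?_
      filter_upwards [Ioo_mem_nhdsLT hx.2] with c hcm
      have h2 := hm c ⟨hx.1.trans hcm.1, hcm.2⟩ hcm.1.ne'
      have h3 : 0 < c - x := by linarith [hcm.1]
      rw [abs_of_pos h3, ← add_mul] at h2
      have := nonneg_of_mul_nonneg_left h2 h3
      linarith
    linarith
  · have hc := hcont (x - a) (by linarith [hx.1]) (by linarith [hx.2])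
    have ht : Filter.Tendsto (fun c => (N - 1) * (sk' κ (x - c) / sk κ (x - c)) * h x)
        (nhdsWithin a (Set.Ioi a)) (nhds ((N - 1) * (sk' κ (x - a) / sk κ (x - a)) * h x)) := by
      have h1 : ContinuousAt (fun c : ℝ => x - c) a := by fun_prop
      exact (ContinuousAt.comp (f := fun c : ℝ => x - c) hc h1).tendsto.mono_left
        nhdsWithin_le_nhds
    refine ge_of_tendsto ht ?_
    filter_upwards [Ioo_mem_nhdsGT hx.1] with c hcm
    have h2 := hm c ⟨hcm.1, hcm.2.trans hx.2⟩ hcm.2.ne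
    have h3 : 0 < x - c := by linarith [hcm.2]
    rw [abs_of_neg (by linarith : c - x < 0), neg_sub,
      show h' * (c - x) = (-h') * (x - c) by ring, ← add_mul] at h2
    have := nonneg_of_mul_nonneg_left h2 h3
    linarith
end

section
/- Let K ∈ ℝ, N ∈ (1,∞) and let a < b be finite real numbers; if K > 0 assume additionally that b − a ≤ π·√((N−1)/K). Let h be an MCP(K,N) density on (a,b). Then the one-sided limits lim_{x → a⁺} h(x) and lim_{x → b⁻} h(x) exist and are finite; in particular h extends to a continuous function on the closed interval [a,b]. -/
open Real MeasureTheory ENNReal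

theorem aux_sigma_s7 (K M : ℝ) (hM : 0 < M) : ∃ s : ℝ → ℝ, Continuous s ∧
    (∀ θ, 0 < θ → K * θ ^ 2 < M * Real.pi ^ 2 → 0 < s θ) ∧
    ∀ θ t, 0 < θ → sigmaR K M t θ = s (t * θ) / s θ := by
  rcases lt_trichotomy K 0 with hK | hK | hK
  · refine ⟨fun θ => Real.sinh (θ * Real.sqrt (-K / M)), by fun_prop, ?_, ?_⟩
    · intro θ h0 _
      have : 0 < Real.sqrt (-K / M) := Real.sqrt_pos.2 (div_pos (by linarith) hM)
      exact Real.sinh_pos_iff.2 (by positivity)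
    · intro θ t h0
      have : K * θ ^ 2 < 0 := mul_neg_of_neg_of_pos hK (by positivity)
      simp [sigmaR, this.le, this.ne, hM.ne']
  · refine ⟨fun θ => θ, by fun_prop, fun θ h _ => h, ?_⟩
    intro θ t h0
    simp [sigmaR, hK, h0.ne']
  · refine ⟨fun θ => Real.sin (θ * Real.sqrt (K / M)), by fun_prop, ?_, ?_⟩
    · intro θ h0 h1
      have : 0 < Real.sqrt (K / M) := Real.sqrt_pos.2 (div_pos hK hM)
      refine Real.sin_pos_of_pos_of_lt_pi (by positivity) ?_
      refine lt_of_pow_lt_pow_left₀ 2 Real.pi_pos.le ?_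
      rw [mul_pow, Real.sq_sqrt (by positivity)]
      rw [mul_div_assoc', div_lt_iff₀ hM]
      linarith
    · intro θ t h0
      have : 0 < K * θ ^ 2 := by positivity
      simp [sigmaR, this]

theorem aux_p (K N a b : ℝ) (hN : 1 < N)
    (hK : 0 < K → b - a ≤ Real.pi * Real.sqrt ((N - 1) / K))
    (h : ℝ → ℝ) (hh : IsMCPDensity K N (Set.Ioo a b) h) :
    ∃ p : ℝ → ℝ, Continuous p ∧ (∀ θ, 0 < θ → θ < b - a → 0 < p θ) ∧
      ∀ x₀ ∈ Set.Ioo a b, ∀ x₁ ∈ Set.Ioo a b, ∀ t ∈ Set.Ioo (0:ℝ) 1, x₀ ≠ x₁ →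
        p ((1 - t) * |x₁ - x₀|) * h x₀ ≤ p |x₁ - x₀| * h (t * x₁ + (1 - t) * x₀) := by
  have hM : 0 < N - 1 := by linarith
  obtain ⟨s, hs, hpos, hsig⟩ := aux_sigma_s7 K (N - 1) hM
  have hlt : ∀ θ, 0 < θ → θ < b - a → K * θ ^ 2 < (N - 1) * Real.pi ^ 2 := by
    intro θ h0 h1
    rcases le_or_gt K 0 with hk | hk
    · have : K * θ ^ 2 ≤ 0 := mul_nonpos_of_nonpos_of_nonneg hk (by positivity)
      have : 0 < (N - 1) * Real.pi ^ 2 := by positivity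
      linarith
    · have h2 := h1.trans_le (hK hk)
      have h3 := pow_lt_pow_left₀ h2 h0.le two_ne_zero
      rw [mul_pow, Real.sq_sqrt (by positivity), mul_div_assoc', lt_div_iff₀ hk] at h3
      linarith
  refine ⟨fun θ => s θ ^ (N - 1), hs.rpow_const (fun _ => Or.inr hM.le), ?_, ?_⟩
  · intro θ h0 h1
    exact Real.rpow_pos_of_pos (hpos θ h0 (hlt θ h0 h1)) _
  · intro x₀ hx₀ x₁ hx₁ t ht hne
    have hθ : 0 < |x₁ - x₀| := abs_pos.2 (sub_ne_zero.2 hne.symm)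
    have hθ' : |x₁ - x₀| < b - a := by
      rw [abs_lt]; constructor <;> linarith [hx₀.1, hx₀.2, hx₁.1, hx₁.2]
    have key := hh.2 x₀ hx₀ x₁ hx₁ t ⟨ht.1.le, ht.2.le⟩
    generalize |x₁ - x₀| = θ at *
    have hl := hlt θ hθ hθ'
    have ht' : 0 < (1 - t) * θ := mul_pos (by linarith [ht.2]) hθ
    have hs1 := hpos _ hθ hl
    have hs2 := hpos _ ht' (hlt _ ht' (by nlinarith [ht.1]))
    have hxm : t * x₁ + (1 - t) * x₀ ∈ Set.Ioo a b := by
      have := (convex_Ioo a b) hx₁ hx₀ ht.1.le (by linarith [ht.2] : 0 ≤ 1 - t) (by ring)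
      simpa using this
    rw [sigmaE, if_neg (not_le.2 hl), hsig _ _ hθ, ENNReal.ofReal_rpow_of_nonneg (by positivity) hM.le,
      ← ENNReal.ofReal_mul (by positivity), ENNReal.ofReal_le_ofReal_iff (hh.1 _ hxm),
      Real.div_rpow hs2.le hs1.le] at key
    have hq : 0 < s θ ^ (N - 1) := Real.rpow_pos_of_pos hs1 _
    rw [div_mul_eq_mul_div, div_le_iff₀ hq] at key
    show s _ ^ _ * _ ≤ s _ ^ _ * _
    linarith

/-- The two one-sided monotonicity properties. -/
def AuxMono (p : ℝ → ℝ) (a b : ℝ) (h : ℝ → ℝ) : Prop :=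
  ∀ x y z, a < x → x < y → y < z → z < b →
    p (z - y) * h x ≤ p (z - x) * h y ∧ p (y - x) * h z ≤ p (z - x) * h y

theorem aux_mono (p : ℝ → ℝ) (a b : ℝ) (h : ℝ → ℝ)
    (H : ∀ x₀ ∈ Set.Ioo a b, ∀ x₁ ∈ Set.Ioo a b, ∀ t ∈ Set.Ioo (0:ℝ) 1, x₀ ≠ x₁ →
        p ((1 - t) * |x₁ - x₀|) * h x₀ ≤ p |x₁ - x₀| * h (t * x₁ + (1 - t) * x₀)) :
    AuxMono p a b h := by
  intro x y z hax hxy hyz hzb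
  have hx : x ∈ Set.Ioo a b := ⟨hax, by linarith⟩
  have hz : z ∈ Set.Ioo a b := ⟨by linarith, hzb⟩
  have hd : 0 < z - x := by linarith
  constructor
  · have := H x hx z hz ((y - x) / (z - x))
      ⟨div_pos (by linarith) hd, (div_lt_one hd).2 (by linarith)⟩ (by linarith)
    rw [abs_of_pos hd] at this
    have e1 : (1 - (y - x) / (z - x)) * (z - x) = z - y := by field_simp; ring
    have e2 : (y - x) / (z - x) * z + (1 - (y - x) / (z - x)) * x = y := by field_simp; ring
    rwa [e1, e2] at this
  · have := H z hz x hx ((z - y) / (z - x))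
      ⟨div_pos (by linarith) hd, (div_lt_one hd).2 (by linarith)⟩ (by linarith)
    rw [abs_sub_comm, abs_of_pos hd] at this
    have e1 : (1 - (z - y) / (z - x)) * (z - x) = y - x := by field_simp; ring
    have e2 : (z - y) / (z - x) * x + (1 - (z - y) / (z - x)) * z = y := by field_simp; ring
    rwa [e1, e2] at this

theorem aux_lim (p : ℝ → ℝ) (a b : ℝ) (h : ℝ → ℝ) (hab : a < b) (hp : Continuous p)
    (hpos : ∀ θ, 0 < θ → θ < b - a → 0 < p θ) (h0 : ∀ x ∈ Set.Ioo a b, 0 ≤ h x)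
    (H : AuxMono p a b h) : ∃ L : ℝ, Filter.Tendsto h (nhdsWithin a (Set.Ioi a)) (nhds L) := by
  obtain ⟨c, hac, hcb⟩ := exists_between hab
  have hm : MonotoneOn (fun x => h x / p (c - x)) (Set.Ioo a c) := by
    intro x hx y hy hxy
    rcases hxy.eq_or_lt with rfl | hxy
    · exact le_rfl
    have h1 := (H x y c hx.1 hxy hy.2 hcb).1
    have p1 := hpos (c - x) (by linarith [hx.2]) (by linarith [hx.1])
    have p2 := hpos (c - y) (by linarith [hy.2]) (by linarith [hy.1])
    show h x / p (c - x) ≤ h y / p (c - y)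
    rw [div_le_div_iff₀ p1 p2]
    linarith
  have hb : BddBelow ((fun x => h x / p (c - x)) '' (Set.Ioo a c)) := by
    refine ⟨0, ?_⟩
    rintro _ ⟨x, hx, rfl⟩
    exact div_nonneg (h0 x ⟨hx.1, by linarith [hx.2]⟩)
      (hpos (c - x) (by linarith [hx.2]) (by linarith [hx.1])).le
  have ht := MonotoneOn.tendsto_nhdsWithin_Ioo_right (Set.nonempty_Ioo.2 hac) hm hb
  have ht2 : Filter.Tendsto (fun x => p (c - x)) (nhdsWithin a (Set.Ioi a)) (nhds (p (c - a))) :=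
    ((hp.comp (continuous_const.sub continuous_id)).tendsto a).mono_left nhdsWithin_le_nhds
  refine ⟨_, (ht.mul ht2).congr' ?_⟩
  filter_upwards [Ioo_mem_nhdsGT hac] with x hx
  exact div_mul_cancel₀ _ (hpos (c - x) (by linarith [hx.2]) (by linarith [hx.1])).ne'

theorem aux_cont (p : ℝ → ℝ) (a b : ℝ) (h : ℝ → ℝ) (hp : Continuous p)
    (hpos : ∀ θ, 0 < θ → θ < b - a → 0 < p θ)
    (H : AuxMono p a b h) : ContinuousOn h (Set.Ioo a b) := by
  intro x hx
  apply ContinuousAt.continuousWithinAt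
  obtain ⟨c, hac, hcx⟩ := exists_between hx.1
  obtain ⟨d, hxd, hdb⟩ := exists_between hx.2
  have q1 := hpos (d - x) (by linarith) (by linarith)
  have q2 := hpos (x - c) (by linarith) (by linarith)
  have tu : Filter.Tendsto (fun y => p (d - y) * h x / p (d - x)) (nhds x) (nhds (h x)) := by
    have : Continuous (fun y => p (d - y) * h x / p (d - x)) := by fun_prop
    have := this.tendsto x
    simpa [mul_div_cancel_left₀ _ q1.ne'] using this
  have tv : Filter.Tendsto (fun y => p (y - c) * h x / p (x - c)) (nhds x) (nhds (h x)) := by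
    have : Continuous (fun y => p (y - c) * h x / p (x - c)) := by fun_prop
    have := this.tendsto x
    simpa [mul_div_cancel_left₀ _ q2.ne'] using this
  have tmin := tu.min tv
  have tmax := tu.max tv
  rw [min_self] at tmin
  rw [max_self] at tmax
  have main : ∀ᶠ y in nhds x, min (p (d - y) * h x / p (d - x)) (p (y - c) * h x / p (x - c)) ≤ h y ∧
      h y ≤ max (p (d - y) * h x / p (d - x)) (p (y - c) * h x / p (x - c)) := by
    filter_upwards [Ioo_mem_nhds hcx hxd] with y hy
    rcases lt_trichotomy x y with hxy | rfl | hxy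
    · have A := (H x y d hx.1 hxy hy.2 hdb).1
      have B := (H c x y hac hcx hxy (by linarith [hy.2])).2
      exact ⟨min_le_of_left_le ((div_le_iff₀ q1).2 (by linarith)),
        le_max_of_le_right ((le_div_iff₀ q2).2 (by linarith))⟩
    · rw [mul_div_cancel_left₀ _ q1.ne', mul_div_cancel_left₀ _ q2.ne']; simp
    · have A := (H y x d (by linarith [hy.1]) hxy hxd hdb).1
      have B := (H c y x hac hy.1 hxy hx.2).2
      exact ⟨min_le_of_right_le ((div_le_iff₀ q2).2 (by linarith)),
        le_max_of_le_left ((le_div_iff₀ q1).2 (by linarith))⟩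
  exact tendsto_of_tendsto_of_tendsto_of_le_of_le' tmin tmax (main.mono fun _ h => h.1)
    (main.mono fun _ h => h.2)

theorem mcp_density_extends_continuously
    (K N a b : ℝ) (hN : 1 < N) (hab : a < b)
    (hK : 0 < K → b - a ≤ Real.pi * Real.sqrt ((N - 1) / K))
    (h : ℝ → ℝ) (hh : IsMCPDensity K N (Set.Ioo a b) h) :
    (∃ La : ℝ, Filter.Tendsto h (nhdsWithin a (Set.Ioi a)) (nhds La)) ∧
    (∃ Lb : ℝ, Filter.Tendsto h (nhdsWithin b (Set.Iio b)) (nhds Lb)) ∧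
    ∃ H : ℝ → ℝ, ContinuousOn H (Set.Icc a b) ∧ ∀ x ∈ Set.Ioo a b, H x = h x := by
  obtain ⟨p, hp, hpos, H0⟩ := aux_p K N a b hN hK h hh
  have H := aux_mono p a b h H0
  obtain ⟨La, hLa⟩ := aux_lim p a b h hab hp hpos hh.1 H
  have H' : AuxMono p (-b) (-a) (fun x => h (-x)) := by
    intro x y z h1 h2 h3 h4
    have := H (-z) (-y) (-x) (by linarith) (by linarith) (by linarith) (by linarith)
    have e1 : -x - -y = y - x := by ring
    have e2 : -x - -z = z - x := by ring
    have e3 : -y - -z = z - y := by ring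
    rw [e1, e2, e3] at this
    exact ⟨this.2, this.1⟩
  obtain ⟨Lb, hLb⟩ := aux_lim p (-b) (-a) (fun x => h (-x)) (by linarith) hp
    (fun θ h1 h2 => hpos θ h1 (by linarith))
    (fun x hx => hh.1 _ ⟨by linarith [hx.2], by linarith [hx.1]⟩) H'
  have hLb' : Filter.Tendsto h (nhdsWithin b (Set.Iio b)) (nhds Lb) := by
    have := hLb.comp (tendsto_neg_nhdsLT (a := b))
    simpa [Function.comp_def] using this
  have hc := aux_cont p a b h hp hpos H
  refine ⟨⟨La, hLa⟩, ⟨Lb, hLb'⟩, extendFrom (Set.Ioo a b) h,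
    continuousOn_Icc_extendFrom_Ioo hc hLa hLb', ?_⟩
  intro x hx
  exact extendFrom_eq (subset_closure hx) (hc x hx)
end

section
/- Let K ∈ ℝ, N ∈ (1,∞), let a < b be finite real numbers, and let h be an MCP(K,N) density on the interval (a,b) with ∫_a^b h(x) dx = 1. Then: if K ≥ 0, sup_{x ∈ (a,b)} h(x) ≤ N/(b−a); and if K < 0, sup_{x ∈ (a,b)} h(x) ≤ (b−a)^{−1} · (∫_0^1 (σ_{K,N−1}^{(t)}(b−a))^{N−1} dt)^{−1}. -/
open Real MeasureTheory ENNReal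

lemma aux_sinh_key (t u : ℝ) (ht0 : 0 ≤ t) (ht1 : t ≤ 1) (hu : 0 ≤ u) :
    t * Real.cosh (t * u) * Real.sinh u ≤ Real.sinh (t * u) * Real.cosh u := by
  have hd : ∀ x : ℝ, HasDerivAt
      (fun x => Real.sinh (t * x) * Real.cosh x - t * Real.cosh (t * x) * Real.sinh x)
      ((1 - t ^ 2) * (Real.sinh (t * x) * Real.sinh x)) x := by
    intro x
    have h1 : HasDerivAt (fun x : ℝ => t * x) t x := by
      simpa using (hasDerivAt_id x).const_mul t
    have h2 := (h1.sinh.mul (Real.hasDerivAt_cosh x)).sub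
      ((h1.cosh.const_mul t).mul (Real.hasDerivAt_sinh x))
    refine h2.congr_deriv ?_
    ring
  have hm : MonotoneOn
      (fun x => Real.sinh (t * x) * Real.cosh x - t * Real.cosh (t * x) * Real.sinh x)
      (Set.Ici 0) := by
    apply monotoneOn_of_deriv_nonneg (convex_Ici 0)
    · exact fun x _ => (hd x).continuousAt.continuousWithinAt
    · exact fun x _ => (hd x).differentiableAt.differentiableWithinAt
    · intro x hx
      rw [(hd x).deriv]
      simp only [interior_Ici, Set.mem_Ioi] at hx
      have : 0 ≤ Real.sinh (t * x) := Real.sinh_nonneg_iff.2 (by positivity)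
      have : 0 ≤ Real.sinh x := Real.sinh_nonneg_iff.2 hx.le
      have : 0 ≤ 1 - t ^ 2 := by nlinarith
      positivity
  have := hm (Set.mem_Ici.2 le_rfl) (Set.mem_Ici.2 hu) hu
  simp at this
  linarith

lemma aux_sinh_ratio (t u v : ℝ) (ht0 : 0 ≤ t) (ht1 : t ≤ 1) (hu : 0 < u) (huv : u ≤ v) :
    Real.sinh (t * v) / Real.sinh v ≤ Real.sinh (t * u) / Real.sinh u := by
  have hd : ∀ x : ℝ, 0 < x → HasDerivAt
      (fun x => Real.sinh (t * x) / Real.sinh x)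
      ((Real.cosh (t * x) * t * Real.sinh x - Real.sinh (t * x) * Real.cosh x)
        / Real.sinh x ^ 2) x := by
    intro x hx
    have h1 : HasDerivAt (fun x : ℝ => t * x) t x := by
      simpa using (hasDerivAt_id x).const_mul t
    exact h1.sinh.div (Real.hasDerivAt_sinh x) (Real.sinh_pos_iff.2 hx).ne'
  have hm : AntitoneOn (fun x => Real.sinh (t * x) / Real.sinh x) (Set.Ioi 0) := by
    apply antitoneOn_of_deriv_nonpos (convex_Ioi 0)
    · exact fun x hx => (hd x hx).continuousAt.continuousWithinAt
    · intro x hx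
      rw [interior_Ioi] at hx
      exact (hd x hx).differentiableAt.differentiableWithinAt
    · intro x hx
      rw [interior_Ioi] at hx
      rw [(hd x hx).deriv]
      apply div_nonpos_of_nonpos_of_nonneg _ (sq_nonneg _)
      have := aux_sinh_key t x ht0 ht1 (le_of_lt hx)
      linarith
  exact hm (Set.mem_Ioi.2 hu) (Set.mem_Ioi.2 (hu.trans_le huv)) huv

lemma aux_sin (t u : ℝ) (ht0 : 0 ≤ t) (ht1 : t ≤ 1) (hu : 0 ≤ u) (hu' : u ≤ Real.pi) :
    t * Real.sin u ≤ Real.sin (t * u) := by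
  have h0 : (0:ℝ) ∈ Set.Icc 0 Real.pi := ⟨le_rfl, Real.pi_pos.le⟩
  have h1 : u ∈ Set.Icc 0 Real.pi := ⟨hu, hu'⟩
  have := strictConcaveOn_sin_Icc.concaveOn.2 h0 h1
    (show 0 ≤ 1 - t by linarith) ht0 (by ring)
  simpa using this

lemma aux_main_s8 (K N a b : ℝ) (hN : 1 < N)
    (h : ℝ → ℝ) (hh : IsMCPDensity K N (Set.Ioo a b) h)
    (hint : ∫ x in Set.Ioo a b, h x = 1) (s : ℝ → ℝ) (hs : Continuous s)
    (hs0 : ∀ t ∈ Set.Icc (0:ℝ) 1, 0 ≤ s t)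
    (hsE : ∀ t ∈ Set.Icc (0:ℝ) 1, ∀ θ, 0 < θ → θ < b - a →
      ENNReal.ofReal (s t) ≤ sigmaE K (N - 1) t θ) (x : ℝ) (hx : x ∈ Set.Ioo a b) :
    (b - a) * (h x * ∫ t in (0:ℝ)..1, s t ^ (N - 1)) ≤ 1 := by
  obtain ⟨hpos, hmcp⟩ := hh
  have hI : IntegrableOn h (Set.Ioo a b) := by
    by_contra hc
    rw [integral_undef hc] at hint
    norm_num at hint
  set I := ∫ t in (0:ℝ)..1, s t ^ (N - 1) with hIdef
  have hg : Continuous (fun t => s t ^ (N - 1)) :=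
    hs.rpow_const (fun _ => Or.inr (by linarith))
  have key : ∀ v ∈ Set.Ioo a b, v ≠ x → ∀ t ∈ Set.Icc (0:ℝ) 1,
      s t ^ (N - 1) * h x ≤ h ((1 - t) * v + t * x) := by
    intro v hv hvx t ht
    have h1 := hmcp x hx v hv (1 - t) ⟨by linarith [ht.2], by linarith [ht.1]⟩
    rw [_root_.sub_sub_cancel] at h1
    have h2 := hsE t ht |v - x| (abs_pos.2 (sub_ne_zero.2 hvx))
      (by rw [abs_lt]; constructor <;> linarith [hx.1, hx.2, hv.1, hv.2])
    have h3 := ENNReal.rpow_le_rpow h2 (z := N - 1) (by linarith)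
    rw [ENNReal.ofReal_rpow_of_nonneg (hs0 t ht) (by linarith)] at h3
    have h4 := (mul_le_mul_left h3 (ENNReal.ofReal (h x))).trans h1
    rw [← ENNReal.ofReal_mul (Real.rpow_nonneg (hs0 t ht) _)] at h4
    have hmem : (1 - t) * v + t * x ∈ Set.Ioo a b := by
      have := (convex_Ioo a b) hv hx (show 0 ≤ 1 - t by linarith [ht.2]) ht.1 (by ring)
      simpa using this
    exact (ENNReal.ofReal_le_ofReal_iff (hpos _ hmem)).1 h4
  have hii : ∀ u ∈ Set.Ioo a b, ∀ v ∈ Set.Ioo a b, IntervalIntegrable h volume u v := by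
    intro u hu v hv
    refine (hI.mono_set ?_).intervalIntegrable
    exact Set.OrdConnected.uIcc_subset (by infer_instance) hu hv
  have hval : ∀ v, v ≠ x → ∫ y in x..v, s ((v - y) / (v - x)) ^ (N - 1) * h x
      = (v - x) * (h x * I) := by
    intro v hv
    have hne : v - x ≠ 0 := sub_ne_zero.2 hv
    rw [intervalIntegral.integral_mul_const]
    have h1 : ∀ y, (v - y) / (v - x) = v / (v - x) - y / (v - x) := fun y => sub_div _ _ _
    simp_rw [h1]
    rw [intervalIntegral.integral_comp_sub_div (fun t => s t ^ (N - 1)) hne]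
    rw [sub_self, ← sub_div, div_self hne, smul_eq_mul]
    ring
  have hgc : ∀ v, Continuous (fun y => s ((v - y) / (v - x)) ^ (N - 1) * h x) := by
    intro v
    exact (hg.comp (by fun_prop : Continuous (fun y => (v - y) / (v - x)))).mul continuous_const
  have right : ∀ v ∈ Set.Ioo x b, (v - x) * (h x * I) ≤ ∫ y in x..v, h y := by
    intro v hv
    have hv' : v ∈ Set.Ioo a b := ⟨hx.1.trans hv.1, hv.2⟩
    have hp : 0 < v - x := sub_pos.2 hv.1
    rw [← hval v hv.1.ne']
    apply intervalIntegral.integral_mono_on hv.1.le ((hgc v).intervalIntegrable _ _)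
      (hii x hx v hv')
    intro y hy
    have := key v hv' hv.1.ne' ((v - y) / (v - x))
      ⟨div_nonneg (by linarith [hy.2]) hp.le, by rw [div_le_one hp]; linarith [hy.1]⟩
    convert this using 2
    field_simp
    ring
  have left : ∀ v ∈ Set.Ioo a x, (x - v) * (h x * I) ≤ ∫ y in v..x, h y := by
    intro v hv
    have hv' : v ∈ Set.Ioo a b := ⟨hv.1, hv.2.trans hx.2⟩
    have hp : 0 < x - v := sub_pos.2 hv.2
    have hn : v - x ≠ 0 := by linarith
    have e : (x - v) * (h x * I) = ∫ y in v..x, s ((v - y) / (v - x)) ^ (N - 1) * h x := by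
      rw [intervalIntegral.integral_symm, hval v hv.2.ne]; ring
    rw [e]
    apply intervalIntegral.integral_mono_on hv.2.le ((hgc v).intervalIntegrable _ _)
      (hii v hv' x hx)
    intro y hy
    have e2 : (v - y) / (v - x) = (y - v) / (x - v) := by
      rw [← neg_sub y v, ← neg_sub x v, neg_div_neg_eq]
    have := key v hv' hv.2.ne ((v - y) / (v - x))
      ⟨by rw [e2]; exact div_nonneg (by linarith [hy.1]) hp.le,
       by rw [e2, div_le_one hp]; linarith [hy.2]⟩
    convert this using 2
    field_simp
    ring
  have both : ∀ u ∈ Set.Ioo a x, ∀ v ∈ Set.Ioo x b, (v - u) * (h x * I) ≤ 1 := by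
    intro u hu v hv
    have hu' : u ∈ Set.Ioo a b := ⟨hu.1, hu.2.trans hx.2⟩
    have hv' : v ∈ Set.Ioo a b := ⟨hx.1.trans hv.1, hv.2⟩
    have h1 := intervalIntegral.integral_add_adjacent_intervals (hii u hu' x hx) (hii x hx v hv')
    have h2 : ∫ y in u..v, h y ≤ 1 := by
      rw [intervalIntegral.integral_of_le (hu.2.trans hv.1).le, ← hint]
      apply setIntegral_mono_set hI
      · exact (ae_restrict_iff' measurableSet_Ioo).2 (Filter.Eventually.of_forall hpos)
      · apply Filter.Eventually.of_forall
        intro y hy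
        exact ⟨hu.1.trans hy.1, hy.2.trans_lt hv.2⟩
    linarith [left u hu, right v hv]
  have hlim : Filter.Tendsto (fun ε : ℝ => (1 - ε) * (b - a) * (h x * I))
      (nhdsWithin 0 (Set.Ioi 0)) (nhds ((1 - 0) * (b - a) * (h x * I))) := by
    apply Filter.Tendsto.mono_left _ nhdsWithin_le_nhds
    exact Continuous.tendsto (by fun_prop) 0
  have := le_of_tendsto hlim (b := 1) (by
    filter_upwards [Ioo_mem_nhdsGT (show (0:ℝ) < 1 by norm_num)] with ε hε
    have hxa := mul_pos hε.1 (sub_pos.2 hx.1)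
    have hxb := mul_pos hε.1 (sub_pos.2 hx.2)
    have hxa' := mul_pos (sub_pos.2 hε.2) (sub_pos.2 hx.1)
    have hxb' := mul_pos (sub_pos.2 hε.2) (sub_pos.2 hx.2)
    have := both (a + ε * (x - a)) ⟨by linarith, by nlinarith⟩
      (b - ε * (b - x)) ⟨by nlinarith, by linarith⟩
    have e : (1 - ε) * (b - a) = b - ε * (b - x) - (a + ε * (x - a)) := by ring
    rw [e]
    exact this)
  simpa using this

theorem mcp_density_sup_bound
    (K N a b : ℝ) (hN : 1 < N) (hab : a < b)
    (h : ℝ → ℝ) (hh : IsMCPDensity K N (Set.Ioo a b) h)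
    (hint : ∫ x in Set.Ioo a b, h x = 1) :
    (0 ≤ K → ∀ x ∈ Set.Ioo a b, h x ≤ N / (b - a)) ∧
    (K < 0 → ∀ x ∈ Set.Ioo a b,
      h x ≤ (b - a)⁻¹ * (∫ t in (0:ℝ)..1, sigmaR K (N - 1) t (b - a) ^ (N - 1))⁻¹) := by
  have hba : 0 < b - a := sub_pos.2 hab
  have hN1 : 0 < N - 1 := sub_pos.2 hN
  constructor
  · intro hK x hx
    have := aux_main_s8 K N a b hN h hh hint (fun t => t) continuous_id (fun t ht => ht.1) (by
      intro t ht θ hθ _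
      unfold sigmaE
      split_ifs with hc
      · exact le_top
      · apply ENNReal.ofReal_le_ofReal
        unfold sigmaR
        rcases hK.eq_or_lt with hK0 | hK0
        · simp [← hK0]
        · have hp : 0 < K * θ ^ 2 := by positivity
          rw [if_pos hp]
          have hu : 0 < θ * √(K / (N - 1)) := by positivity
          have hu' : θ * √(K / (N - 1)) < Real.pi := by
            apply lt_of_pow_lt_pow_left₀ 2 Real.pi_pos.le
            rw [mul_pow, Real.sq_sqrt (by positivity), ← mul_div_assoc, div_lt_iff₀ hN1]
            push Not at hc
            linarith
          rw [le_div_iff₀ (Real.sin_pos_of_pos_of_lt_pi hu hu'), mul_assoc]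
          exact aux_sin t _ ht.1 ht.2 hu.le hu'.le) x hx
    rw [integral_rpow (Or.inl (by linarith))] at this
    rw [le_div_iff₀ hba]
    have hz : (0:ℝ) ^ (N - 1 + 1) = 0 := Real.zero_rpow (by linarith)
    rw [hz, Real.one_rpow, sub_zero, sub_add_cancel, ← mul_assoc, mul_one_div,
      div_le_one (by linarith)] at this
    linarith
  · intro hK x hx
    set c := √(-K / (N - 1)) with hc
    have hcp : 0 < c := Real.sqrt_pos.2 (div_pos (by linarith) hN1)
    have hsig : ∀ t θ, 0 < θ → sigmaR K (N - 1) t θ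
        = Real.sinh (t * (θ * c)) / Real.sinh (θ * c) := by
      intro t θ hθ
      have hneg : K * θ ^ 2 < 0 := mul_neg_of_neg_of_pos hK (by positivity)
      unfold sigmaR
      rw [if_neg (not_lt.2 hneg.le), if_neg (by
        rintro (h1 | h1)
        · exact hneg.ne h1
        · exact hN1.ne' h1), mul_assoc]
    have hs : Continuous (fun t => sigmaR K (N - 1) t (b - a)) := by
      simp_rw [hsig _ _ hba]
      fun_prop
    have hsinh : 0 < Real.sinh ((b - a) * c) := Real.sinh_pos_iff.2 (by positivity)
    have := aux_main_s8 K N a b hN h hh hint (fun t => sigmaR K (N - 1) t (b - a)) hs (by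
      intro t ht
      simp only [hsig _ _ hba]
      have := ht.1
      exact div_nonneg (Real.sinh_nonneg_iff.2 (by positivity)) hsinh.le) (by
      intro t ht θ hθ hθ'
      unfold sigmaE
      split_ifs with hc
      · exact le_top
      · apply ENNReal.ofReal_le_ofReal
        simp only [hsig _ _ hba, hsig _ _ hθ]
        exact aux_sinh_ratio t _ _ ht.1 ht.2 (by positivity) (by gcongr)) x hx
    have hIpos : 0 < ∫ t in (0:ℝ)..1, sigmaR K (N - 1) t (b - a) ^ (N - 1) := by
      apply intervalIntegral.intervalIntegral_pos_of_pos_on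
      · exact (hs.rpow_const (fun _ => Or.inr hN1.le)).intervalIntegrable _ _
      · intro t ht
        rw [hsig _ _ hba]
        have := ht.1
        exact Real.rpow_pos_of_pos (div_pos (Real.sinh_pos_iff.2 (by positivity)) hsinh) _
      · norm_num
    rw [← mul_inv, ← one_div, le_div_iff₀ (mul_pos hba hIpos)]
    linarith
end

section
/- For every K ∈ ℝ, N ∈ (1,∞) and R > 0 there exists a constant C = C(K,N,R) > 0 with the following property: for every finite interval (a,b) with 0 < b − a ≤ R and every MCP(K,N) density h on (a,b) with ∫_a^b h(x) dx = 1, the almost-everywhere defined derivative h′ of h (which exists a.e. since h is locally Lipschitz) satisfies ∫_a^b |h′(x)| dx ≤ C/(b−a). -/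
open Real MeasureTheory ENNReal

lemma sinh_lower (s z : ℝ) (hs0 : 0 ≤ s) (hs1 : s ≤ 1) (hz : 0 ≤ z) :
    s * Real.exp (-((1 - s) * z)) * Real.sinh z ≤ Real.sinh (s * z) := by
  have hc := convexOn_exp.2 (Set.mem_univ (-2 * z)) (Set.mem_univ 0) hs0
    (by linarith : 0 ≤ 1 - s) (by ring)
  simp only [smul_eq_mul, mul_zero, add_zero, Real.exp_zero, mul_one] at hc
  have e1 : Real.exp (-((1 - s) * z)) * Real.exp z = Real.exp (s * z) := by
    rw [← Real.exp_add]; congr 1; ring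
  have e2 : Real.exp (-((1 - s) * z)) * Real.exp (-z) = Real.exp (s * z) * Real.exp (-2 * z) := by
    rw [← Real.exp_add, ← Real.exp_add]; congr 1; ring
  have e3 : Real.exp (-(s * z)) = Real.exp (s * z) * Real.exp (s * (-2 * z)) := by
    rw [← Real.exp_add]; congr 1; ring
  rw [Real.sinh_eq, Real.sinh_eq, e3]
  have : s * Real.exp (-((1 - s) * z)) * ((Real.exp z - Real.exp (-z)) / 2)
      = s * (Real.exp (s * z) - Real.exp (s * z) * Real.exp (-2 * z)) / 2 := by
    linear_combination s / 2 * e1 - s / 2 * e2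
  rw [this]
  have := mul_le_mul_of_nonneg_left hc (Real.exp_pos (s * z)).le
  nlinarith

lemma sin_lower (s z : ℝ) (hs0 : 0 ≤ s) (hs1 : s ≤ 1) (hz : 0 ≤ z) (hz' : z ≤ Real.pi) :
    s * Real.sin z ≤ Real.sin (s * z) := by
  have hc := strictConcaveOn_sin_Icc.concaveOn.2 (x := z) (y := 0) ⟨hz, hz'⟩
    ⟨le_rfl, Real.pi_pos.le⟩ hs0 (by linarith : 0 ≤ 1 - s) (by ring)
  simpa using hc

lemma sigma_lower (K p s θ : ℝ) (hp : 0 < p) (hs0 : 0 ≤ s) (hs1 : s ≤ 1) (hθ : 0 < θ) :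
    ENNReal.ofReal (s * Real.exp (-((1 - s) * (θ * Real.sqrt (|K| / p))))) ≤ sigmaE K p s θ := by
  unfold sigmaE
  split_ifs with h1
  · exact le_top
  apply ENNReal.ofReal_le_ofReal
  push Not at h1
  have hθ2 : 0 < θ ^ 2 := by positivity
  have hle : s * Real.exp (-((1 - s) * (θ * Real.sqrt (|K| / p)))) ≤ s := by
    apply mul_le_of_le_one_right hs0
    rw [Real.exp_le_one_iff]
    have : 0 ≤ (1 - s) * (θ * Real.sqrt (|K| / p)) :=
      mul_nonneg (by linarith) (by positivity)
    linarith
  unfold sigmaR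
  split_ifs with h2 h3
  · refine hle.trans ?_
    have hK : 0 < K := pos_of_mul_pos_left h2 hθ2.le
    have hz : 0 < θ * Real.sqrt (K / p) := by positivity
    have hz' : θ * Real.sqrt (K / p) < Real.pi := by
      apply lt_of_pow_lt_pow_left₀ 2 Real.pi_pos.le
      rw [mul_pow, Real.sq_sqrt (by positivity), ← mul_div_assoc, div_lt_iff₀ hp]
      linarith
    rw [le_div_iff₀ (Real.sin_pos_of_pos_of_lt_pi hz hz'), mul_assoc s]
    exact sin_lower s _ hs0 hs1 hz.le hz'.le
  · exact hle
  · push Not at h3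
    have hK : K < 0 := by
      rcases lt_trichotomy K 0 with h | h | h
      · exact h
      · exact absurd (by rw [h]; ring) h3.1
      · exact absurd (by positivity) h2
    have hK' : 0 < -K := by linarith
    rw [abs_of_neg hK]
    have hz : 0 < θ * Real.sqrt (-K / p) := by positivity
    rw [le_div_iff₀ (Real.sinh_pos_iff.2 hz), mul_assoc s θ]
    exact sinh_lower s _ hs0 hs1 hz.le

lemma mcp_step (K N a b : ℝ) (hN : 1 < N) (h : ℝ → ℝ) (H : IsMCPDensity K N (Set.Ioo a b) h)
    (x y z : ℝ) (hx : a < x) (hxy : x < y) (hyz : y < z) (hz : z < b) :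
    ((z - y) / (z - x) * Real.exp (-((y - x) * Real.sqrt (|K| / (N - 1))))) ^ (N - 1) * h x
      ≤ h y := by
  have hzx : 0 < z - x := by linarith
  have hx0 := H.1 x ⟨hx, by linarith⟩
  have hy0 := H.1 y ⟨by linarith, by linarith⟩
  have h1 := H.2 x ⟨hx, by linarith⟩ z ⟨by linarith, hz⟩ ((y - x) / (z - x))
    ⟨div_nonneg (by linarith) hzx.le, (div_le_one hzx).2 (by linarith)⟩
  have e1 : 1 - (y - x) / (z - x) = (z - y) / (z - x) := by field_simp; ring
  have e2 : (y - x) / (z - x) * z + (1 - (y - x) / (z - x)) * x = y := by field_simp; ring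
  rw [e2, e1, abs_of_pos hzx] at h1
  have h2 := sigma_lower K (N - 1) ((z - y) / (z - x)) (z - x) (by linarith)
    (div_nonneg (by linarith) hzx.le) ((div_le_one hzx).2 (by linarith)) hzx
  have e3 : (1 - (z - y) / (z - x)) * ((z - x) * Real.sqrt (|K| / (N - 1)))
      = (y - x) * Real.sqrt (|K| / (N - 1)) := by field_simp; ring
  rw [e3] at h2
  have h3 := (mul_le_mul_left (ENNReal.rpow_le_rpow h2 (by linarith : 0 ≤ N - 1))
    (ENNReal.ofReal (h x))).trans h1
  have hq : 0 ≤ (z - y) / (z - x) * Real.exp (-((y - x) * Real.sqrt (|K| / (N - 1)))) :=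
    mul_nonneg (div_nonneg (by linarith) hzx.le) (Real.exp_pos _).le
  rw [ENNReal.ofReal_rpow_of_nonneg hq (by linarith),
    ← ENNReal.ofReal_mul (Real.rpow_nonneg hq _)] at h3
  exact (ENNReal.ofReal_le_ofReal_iff hy0).1 h3

/-- the weight -/
noncomputable def Wt (A p b x : ℝ) : ℝ := Real.exp (-(A * x)) * (b - x) ^ p

lemma Wt_pos {A p b x : ℝ} (hx : x < b) : 0 < Wt A p b x :=
  mul_pos (Real.exp_pos _) (Real.rpow_pos_of_pos (by linarith) _)

lemma mcp_mono (K N a b : ℝ) (hN : 1 < N) (h : ℝ → ℝ) (H : IsMCPDensity K N (Set.Ioo a b) h)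
    (x y : ℝ) (hx : a < x) (hxy : x ≤ y) (hy : y < b) :
    h x * Wt (Real.sqrt (|K| / (N - 1)) * (N - 1)) (N - 1) b y ≤
      h y * Wt (Real.sqrt (|K| / (N - 1)) * (N - 1)) (N - 1) b x := by
  rcases hxy.eq_or_lt with rfl | hxy
  · exact le_rfl
  set c := Real.sqrt (|K| / (N - 1)) with hc
  have hbx : b - x ≠ 0 := by linarith
  have ht : Filter.Tendsto
      (fun z => ((z - y) / (z - x) * Real.exp (-((y - x) * c))) ^ (N - 1) * h x)
      (nhdsWithin b (Set.Iio b))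
      (nhds (((b - y) / (b - x) * Real.exp (-((y - x) * c))) ^ (N - 1) * h x)) := by
    apply Filter.Tendsto.mono_left _ nhdsWithin_le_nhds
    have : ContinuousAt
      (fun z => ((z - y) / (z - x) * Real.exp (-((y - x) * c))) ^ (N - 1) * h x) b := by
      refine ContinuousAt.mul (ContinuousAt.rpow_const (ContinuousAt.mul (ContinuousAt.div ?_ ?_ hbx) ?_) ?_) ?_
      · fun_prop
      · fun_prop
      · fun_prop
      · right; linarith
      · fun_prop
    exact this
  have h1 : ((b - y) / (b - x) * Real.exp (-((y - x) * c))) ^ (N - 1) * h x ≤ h y := by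
    apply le_of_tendsto ht
    filter_upwards [Ioo_mem_nhdsLT hy] with z hz
    exact mcp_step K N a b hN h H x y z hx hxy hz.1 hz.2
  have e : ((b - y) / (b - x) * Real.exp (-((y - x) * c))) ^ (N - 1)
      = Wt (c * (N - 1)) (N - 1) b y / Wt (c * (N - 1)) (N - 1) b x := by
    unfold Wt
    rw [Real.mul_rpow (div_nonneg (by linarith) (by linarith)) (Real.exp_pos _).le,
      Real.div_rpow (by linarith) (by linarith), ← Real.exp_mul]
    have : Real.exp (-((y - x) * c) * (N - 1)) =
        Real.exp (-(c * (N - 1) * y)) / Real.exp (-(c * (N - 1) * x)) := by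
      rw [← Real.exp_sub]; congr 1; ring
    rw [this]; ring
  rw [e, div_mul_eq_mul_div, div_le_iff₀ (Wt_pos (by linarith))] at h1
  linarith

lemma mcp_neg (K N a b : ℝ) (h : ℝ → ℝ) (H : IsMCPDensity K N (Set.Ioo a b) h) :
    IsMCPDensity K N (Set.Ioo (-b) (-a)) (fun x => h (-x)) := by
  have hm : ∀ x ∈ Set.Ioo (-b) (-a), -x ∈ Set.Ioo a b := fun x hx =>
    ⟨by linarith [hx.2], by linarith [hx.1]⟩
  refine ⟨fun x hx => H.1 _ (hm x hx), fun x hx y hy t ht => ?_⟩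
  have := H.2 (-x) (hm x hx) (-y) (hm y hy) t ht
  have e1 : |(-y) - (-x)| = |y - x| := by rw [← abs_neg]; congr 1; ring
  have e2 : t * -y + (1 - t) * -x = -(t * y + (1 - t) * x) := by ring
  rwa [e1, e2] at this

lemma Wt_hasDerivAt {A p b x : ℝ} (hx : x < b) :
    HasDerivAt (Wt A p b) (-(A + p / (b - x)) * Wt A p b x) x := by
  have hbx : b - x ≠ 0 := by linarith
  have h1 : HasDerivAt (fun x => Real.exp (-(A * x))) (Real.exp (-(A * x)) * (-(A * 1))) x :=
    (((hasDerivAt_id x).const_mul A).neg).exp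
  have h2 : HasDerivAt (fun x => (b - x) ^ p) (-1 * p * (b - x) ^ (p - 1)) x :=
    ((hasDerivAt_id x).const_sub b).rpow_const (Or.inl hbx)
  have h3 := h1.mul h2
  refine h3.congr_deriv ?_
  unfold Wt
  rw [Real.rpow_sub_one hbx]
  ring

lemma half_bound (a b A p : ℝ) (hab : a < b) (hA : 0 ≤ A) (hp : 0 < p) (h : ℝ → ℝ)
    (h0 : ∀ x ∈ Set.Ioo a b, 0 ≤ h x)
    (hmono : ∀ x y, a < x → x ≤ y → y < b → h x * Wt A p b y ≤ h y * Wt A p b x)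
    (hint : IntervalIntegrable h volume a ((a + b) / 2)) :
    IntervalIntegrable (deriv h) volume a ((a + b) / 2) ∧
    ∫ x in a..((a + b) / 2), |deriv h x| ≤
      Wt A p b a / Wt A p b ((a + b) / 2) * h ((a + b) / 2)
      + (A + 2 * p / (b - a)) * ∫ x in a..((a + b) / 2), h x := by
  set m := (a + b) / 2 with hm
  have ham : a < m := by rw [hm]; linarith
  have hmb : m < b := by rw [hm]; linarith
  set G : ℝ → ℝ := fun x => if x ≤ a then 0 else h x / Wt A p b x with hG
  have hGmono : MonotoneOn G (Set.Icc a m) := by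
    intro x hx y hy hxy
    simp only [hG]
    have hyb : y < b := lt_of_le_of_lt hy.2 hmb
    split_ifs with h1 h2 h2
    · exact le_rfl
    · push Not at h2
      exact div_nonneg (h0 y ⟨h2, hyb⟩) (Wt_pos hyb).le
    · exact absurd (hxy.trans h2) h1
    · push Not at h1 h2
      rw [div_le_div_iff₀ (Wt_pos (by linarith)) (Wt_pos hyb)]
      exact hmono x y h1 hxy hyb
  have hGmono' : MonotoneOn G (Set.uIcc a m) := by rwa [Set.uIcc_of_le ham.le]
  have hGi := hGmono'.intervalIntegrable_deriv
  have hGint : ∫ x in a..m, deriv G x ≤ h m / Wt A p b m := by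
    have h1 := hGmono'.intervalIntegral_deriv_mem_uIcc
    have hGa : G a = 0 := by simp [hG]
    have hGm : G m = h m / Wt A p b m := by simp [hG, ham]
    rw [hGa, hGm, sub_zero, Set.uIcc_of_le (div_nonneg (h0 m ⟨ham, hmb⟩) (Wt_pos hmb).le)] at h1
    exact h1.2
  have hdom : ∀ᵐ x ∂(volume.restrict (Set.Ioc a m)),
      |deriv h x| ≤ Wt A p b a * deriv G x + (A + 2 * p / (b - a)) * h x := by
    rw [← Measure.restrict_congr_set (Ioo_ae_eq_Ioc (μ := volume) (a := a) (b := m))]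
    have hGo : MonotoneOn G (Set.Ioo a m) := hGmono.mono Set.Ioo_subset_Icc_self
    filter_upwards [hGo.ae_differentiableWithinAt measurableSet_Ioo,
      ae_restrict_mem measurableSet_Ioo] with x hd hx
    have hxn : Set.Ioo a m ∈ nhds x := isOpen_Ioo.mem_nhds hx
    have hd' : DifferentiableAt ℝ G x := hd.differentiableAt hxn
    have hxb : x < b := hx.2.trans hmb
    have hG0 : 0 ≤ deriv G x := by
      have := hGo.derivWithin_nonneg (x := x)
      rwa [derivWithin_of_mem_nhds hxn] at this
    have heq : h =ᶠ[nhds x] fun y => G y * Wt A p b y := by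
      filter_upwards [hxn] with y hy
      have : Wt A p b y ≠ 0 := (Wt_pos (hy.2.trans hmb)).ne'
      simp only [hG, not_le.2 hy.1, if_false]
      field_simp
    have hder : deriv h x = deriv G x * Wt A p b x - (A + p / (b - x)) * h x := by
      have h1 := (hd'.hasDerivAt.mul (Wt_hasDerivAt (A := A) (p := p) hxb)).congr_of_eventuallyEq heq
      rw [h1.deriv, heq.self_of_nhds]; ring
    have hW : Wt A p b x ≤ Wt A p b a := by
      unfold Wt
      apply mul_le_mul
      · apply Real.exp_le_exp.2
        have := mul_le_mul_of_nonneg_left hx.1.le hA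
        linarith
      · exact Real.rpow_le_rpow (by linarith) (by linarith [hx.1]) hp.le
      · exact Real.rpow_nonneg (by linarith) _
      · exact (Real.exp_pos _).le
    have hx0 := h0 x ⟨hx.1, hxb⟩
    have hq : p / (b - x) ≤ 2 * p / (b - a) := by
      rw [div_le_div_iff₀ (by linarith) (by linarith)]
      have : b - a ≤ 2 * (b - x) := by have := hx.2; rw [hm] at this; linarith
      nlinarith
    have hq0 : 0 ≤ p / (b - x) := div_nonneg hp.le (by linarith)
    have i1 : deriv G x * Wt A p b x ≤ Wt A p b a * deriv G x := by
      rw [mul_comm]; exact mul_le_mul_of_nonneg_right hW hG0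
    have i2 : 0 ≤ deriv G x * Wt A p b x := mul_nonneg hG0 (Wt_pos hxb).le
    have i3 : (A + p / (b - x)) * h x ≤ (A + 2 * p / (b - a)) * h x :=
      mul_le_mul_of_nonneg_right (by linarith) hx0
    have i4 : 0 ≤ (A + p / (b - x)) * h x := mul_nonneg (by linarith) hx0
    rw [hder, abs_le]
    constructor <;> linarith
  have hgi : IntervalIntegrable
      (fun x => Wt A p b a * deriv G x + (A + 2 * p / (b - a)) * h x) volume a m :=
    (hGi.const_mul _).add (hint.const_mul _)
  have hdi : IntervalIntegrable (deriv h) volume a m := by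
    rw [intervalIntegrable_iff_integrableOn_Ioc_of_le ham.le] at hgi ⊢
    exact Integrable.mono' hgi (measurable_deriv h).aestronglyMeasurable hdom
  refine ⟨hdi, ?_⟩
  calc ∫ x in a..m, |deriv h x|
      ≤ ∫ x in a..m, (Wt A p b a * deriv G x + (A + 2 * p / (b - a)) * h x) := by
        rw [intervalIntegral.integral_of_le ham.le, intervalIntegral.integral_of_le ham.le]
        rw [intervalIntegrable_iff_integrableOn_Ioc_of_le ham.le] at hgi
        exact integral_mono_of_nonneg (Filter.Eventually.of_forall fun x => abs_nonneg _) hgi hdom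
    _ = Wt A p b a * (∫ x in a..m, deriv G x) + (A + 2 * p / (b - a)) * ∫ x in a..m, h x := by
        rw [intervalIntegral.integral_add (hGi.const_mul _) (hint.const_mul _),
          intervalIntegral.integral_const_mul, intervalIntegral.integral_const_mul]
    _ ≤ _ := by
        have := mul_le_mul_of_nonneg_left hGint (Wt_pos (A := A) (p := p) hab).le
        have e : Wt A p b a / Wt A p b m * h m = Wt A p b a * (h m / Wt A p b m) := by ring
        rw [e]; linarith

lemma Wt_ratio {A p b x y R : ℝ} (hA : 0 ≤ A) (hp : 0 < p) (hy : y < b)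
    (h2 : b - x ≤ 2 * (b - y)) (hxy : x ≤ y) (hR : y - x ≤ R) :
    Wt A p b x ≤ Real.exp (A * R) * 2 ^ p * Wt A p b y := by
  unfold Wt
  have h3 : (b - x) ^ p ≤ 2 ^ p * (b - y) ^ p := by
    rw [← Real.mul_rpow (by norm_num) (by linarith)]
    exact Real.rpow_le_rpow (by linarith) h2 hp.le
  have h4 : Real.exp (-(A * x)) ≤ Real.exp (A * R) * Real.exp (-(A * y)) := by
    rw [← Real.exp_add]
    apply Real.exp_le_exp.2
    have := mul_le_mul_of_nonneg_left hR hA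
    linarith
  have := mul_le_mul h4 h3 (Real.rpow_nonneg (by linarith) _) (by positivity)
  calc _ ≤ _ := this
    _ = _ := by ring

lemma mid_bound (a b A p R : ℝ) (hab : a < b) (hR : b - a ≤ R) (hA : 0 ≤ A) (hp : 0 < p)
    (h : ℝ → ℝ) (h0 : ∀ x ∈ Set.Ioo a b, 0 ≤ h x)
    (hmono : ∀ x y, a < x → x ≤ y → y < b → h x * Wt A p b y ≤ h y * Wt A p b x)
    (hint : IntegrableOn h (Set.Ioo a b)) (h1 : ∫ x in Set.Ioo a b, h x = 1) :
    h ((a + b) / 2) ≤ 4 * (Real.exp (A * R) * 2 ^ p) / (b - a) := by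
  set m := (a + b) / 2 with hm
  set Q := Real.exp (A * R) * 2 ^ p with hQ
  have hQ0 : 0 < Q := by positivity
  have ham : a < m := by rw [hm]; linarith
  have hmb : m < b := by rw [hm]; linarith
  have hsub : Set.Ioo m (m + (b - a) / 4) ⊆ Set.Ioo a b := by
    intro x hx
    exact ⟨ham.trans hx.1, by have := hx.2; rw [hm] at this; linarith⟩
  have hlow : ∀ x ∈ Set.Ioo m (m + (b - a) / 4), h m / Q ≤ h x := by
    intro x hx
    have hxb := (hsub hx).2
    have i1 := hmono m x ham hx.1.le hxb
    have i2 : Wt A p b m ≤ Q * Wt A p b x :=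
      Wt_ratio hA hp hxb (by have := hx.2; rw [hm] at this ⊢; linarith) hx.1.le
        (by linarith)
    rw [div_le_iff₀ hQ0]
    have i3 := mul_le_mul_of_nonneg_left i2 (h0 x (hsub hx))
    have : h m * Wt A p b x ≤ (h x * Q) * Wt A p b x := by linarith
    exact le_of_mul_le_mul_right this (Wt_pos hxb)
  have i1 : ∫ x in Set.Ioo m (m + (b - a) / 4), h m / Q ≤
      ∫ x in Set.Ioo m (m + (b - a) / 4), h x :=
    setIntegral_mono_on (by simp) (hint.mono_set hsub) measurableSet_Ioo hlow
  have i2 : ∫ x in Set.Ioo m (m + (b - a) / 4), h x ≤ ∫ x in Set.Ioo a b, h x :=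
    setIntegral_mono_set hint
      ((ae_restrict_iff' measurableSet_Ioo).2 (Filter.Eventually.of_forall h0))
      (Filter.Eventually.of_forall hsub)
  have i3 : ∫ x in Set.Ioo m (m + (b - a) / 4), h m / Q = (b - a) / 4 * (h m / Q) := by
    rw [setIntegral_const, Measure.real, Real.volume_Ioo, ENNReal.toReal_ofReal (by linarith)]
    simp
  rw [i3] at i1
  have i4 : (b - a) / 4 * (h m / Q) ≤ 1 := by linarith
  rw [le_div_iff₀ (by linarith)]
  have : (b - a) / 4 * (h m / Q) = (h m * (b - a)) / (4 * Q) := by field_simp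
  rw [this, div_le_one (by positivity)] at i4
  exact i4

theorem mcp_density_deriv_L1_bound (K N : ℝ) (hN : 1 < N) (R : ℝ) (hR : 0 < R) :
    ∃ C > (0:ℝ), ∀ a b : ℝ, 0 < b - a → b - a ≤ R →
      ∀ h : ℝ → ℝ, IsMCPDensity K N (Set.Ioo a b) h →
      (∫ x in Set.Ioo a b, h x) = 1 →
      ∫ x in Set.Ioo a b, |deriv h x| ≤ C / (b - a) := by
  set p := N - 1 with hpdef
  have hp : 0 < p := by linarith
  set A := Real.sqrt (|K| / (N - 1)) * (N - 1) with hAdef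
  have hA : 0 ≤ A := mul_nonneg (Real.sqrt_nonneg _) hp.le
  set Q := Real.exp (A * R) * (2:ℝ) ^ p with hQ
  have hQ0 : 0 < Q := by positivity
  refine ⟨8 * Q ^ 2 + A * R + 2 * p, by positivity, ?_⟩
  intro a b hab hbR h H h1
  have hab' : a < b := by linarith
  set m := (a + b) / 2 with hm
  have ham : a < m := by rw [hm]; linarith
  have hmb : m < b := by rw [hm]; linarith
  have hint : IntegrableOn h (Set.Ioo a b) := by
    by_contra hc
    rw [integral_undef hc] at h1
    exact zero_ne_one h1
  have hII : IntervalIntegrable h volume a b :=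
    (intervalIntegrable_iff_integrableOn_Ioo_of_le hab'.le).2 hint
  have hII1 : IntervalIntegrable h volume a m := hII.mono_set (by
    rw [Set.uIcc_of_le ham.le, Set.uIcc_of_le hab'.le]; exact Set.Icc_subset_Icc_right hmb.le)
  have hII2 : IntervalIntegrable h volume m b := hII.mono_set (by
    rw [Set.uIcc_of_le hmb.le, Set.uIcc_of_le hab'.le]; exact Set.Icc_subset_Icc_left ham.le)
  have hmono := mcp_mono K N a b hN h H
  have H' := mcp_neg K N a b h H
  have hmono' := mcp_mono K N (-b) (-a) hN _ H'
  have hmid := mid_bound a b A p R hab' hbR hA hp h H.1 hmono hint h1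
  obtain ⟨d1, B1⟩ := half_bound a b A p hab' hA hp h H.1 hmono hII1
  have em : (-b + -a) / 2 = -m := by rw [hm]; ring
  obtain ⟨d2, B2⟩ := half_bound (-b) (-a) A p (by linarith) hA hp _ H'.1 hmono'
    (by rw [em]; simpa using (IntervalIntegrable.iff_comp_neg (f := h) (a := m) (b := b)).1 hII2 |>.symm)
  have hdn : deriv (fun x => h (-x)) = fun x => - deriv h (-x) := by
    funext x; exact deriv_comp_neg h x
  rw [em] at d2 B2
  simp only [hdn, abs_neg, neg_neg] at d2 B2
  rw [intervalIntegral.integral_comp_neg (fun x => |deriv h x|),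
    intervalIntegral.integral_comp_neg h, neg_neg, neg_neg] at B2
  have d2' : IntervalIntegrable (deriv h) volume m b := by
    have := d2.neg
    rw [IntervalIntegrable.iff_comp_neg]
    simpa [Pi.neg_def] using this.symm
  rw [← integral_Ioc_eq_integral_Ioo, ← intervalIntegral.integral_of_le hab'.le] at h1
  rw [← integral_Ioc_eq_integral_Ioo, ← intervalIntegral.integral_of_le hab'.le,
    ← intervalIntegral.integral_add_adjacent_intervals d1.abs d2'.abs]
  rw [← intervalIntegral.integral_add_adjacent_intervals hII1 hII2] at h1
  have eL : -a - -b = b - a := by ring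
  rw [eL] at B2
  have hm0 : 0 ≤ h m := H.1 m ⟨ham, hmb⟩
  have r1 : Wt A p b a / Wt A p b m ≤ Q := by
    rw [div_le_iff₀ (Wt_pos hmb)]
    exact Wt_ratio hA hp hmb (by rw [hm]; linarith) ham.le (by linarith)
  have r2 : Wt A p (-a) (-b) / Wt A p (-a) (-m) ≤ Q := by
    rw [div_le_iff₀ (Wt_pos (by linarith))]
    exact Wt_ratio hA hp (by linarith) (by rw [hm]; linarith) (by linarith) (by linarith)
  have s1 := mul_le_mul_of_nonneg_right r1 hm0
  have s2 := mul_le_mul_of_nonneg_right r2 hm0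
  have s3 := mul_le_mul_of_nonneg_left hmid hQ0.le
  have s4 : A ≤ A * R / (b - a) := by
    rw [le_div_iff₀ hab]; exact mul_le_mul_of_nonneg_left hbR hA
  have e5 : (8 * Q ^ 2 + A * R + 2 * p) / (b - a)
      = 2 * (Q * (4 * Q / (b - a))) + A * R / (b - a) + 2 * p / (b - a) := by ring
  have e6 : (A + 2 * p / (b - a)) * (∫ x in a..m, h x) + (A + 2 * p / (b - a)) * (∫ x in m..b, h x)
      = A + 2 * p / (b - a) := by rw [← mul_add, h1, mul_one]
  rw [e5]
  linarith
end

section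
/- Let N ∈ (1,∞) and let h : ℝ → [0,∞) satisfy h(t·x₁ + (1−t)·x₀) ≥ (1−t)^{N−1}·h(x₀) for all x₀, x₁ ∈ ℝ and all t ∈ [0,1] (i.e. h is an MCP(0,N) density on the whole real line). Then h is constant on ℝ. -/
theorem mcp_zero_density_on_line_constant (N : ℝ) (hN : 1 < N)
    (h : ℝ → ℝ) (hnonneg : ∀ x : ℝ, 0 ≤ h x)
    (hmcp : ∀ x₀ x₁ : ℝ, ∀ t ∈ Set.Icc (0:ℝ) 1,
      (1 - t) ^ (N - 1) * h x₀ ≤ h (t * x₁ + (1 - t) * x₀)) :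
    ∀ x y : ℝ, h x = h y := by
  have key : ∀ x y : ℝ, h x ≤ h y := by
    intro x y
    have hc : Continuous (fun t : ℝ => (1 - t) ^ (N - 1) * h x) :=
      ((continuous_const.sub continuous_id).rpow_const
        (fun _ => Or.inr (by linarith))).mul continuous_const
    have ht : Filter.Tendsto (fun t : ℝ => (1 - t) ^ (N - 1) * h x)
        (nhdsWithin 0 (Set.Ioi 0)) (nhds (h x)) := by
      have := (hc.tendsto 0).mono_left (nhdsWithin_le_nhds (s := Set.Ioi 0))
      simpa using this
    refine le_of_tendsto ht ?_
    filter_upwards [Ioo_mem_nhdsGT (show (0:ℝ) < 1 by norm_num)] with t ht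
    have h1 := hmcp x (x + (y - x) / t) t ⟨ht.1.le, ht.2.le⟩
    have h0 : t ≠ 0 := ht.1.ne'
    have e : t * (x + (y - x) / t) + (1 - t) * x = y := by
      field_simp
      ring
    rwa [e] at h1
  exact fun x y => le_antisymm (key x y) (key y x)
end

section
/- Let N ∈ (1,∞), a ∈ ℝ, and let h : [a,∞) → [0,∞) satisfy h(t·x₁ + (1−t)·x₀) ≥ (1−t)^{N−1}·h(x₀) for all x₀, x₁ ∈ [a,∞) and all t ∈ [0,1] (i.e. h is an MCP(0,N) density on the half-line [a,∞)). Then h is non-decreasing: h(x₀) ≤ h(x₁) whenever a ≤ x₀ ≤ x₁. -/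
theorem mcp_zero_density_on_halfline_monotone (N a : ℝ) (hN : 1 < N)
    (h : ℝ → ℝ) (hnonneg : ∀ x ∈ Set.Ici a, 0 ≤ h x)
    (hmcp : ∀ x₀ ∈ Set.Ici a, ∀ x₁ ∈ Set.Ici a, ∀ t ∈ Set.Icc (0:ℝ) 1,
      (1 - t) ^ (N - 1) * h x₀ ≤ h (t * x₁ + (1 - t) * x₀)) :
    ∀ x₀ x₁ : ℝ, a ≤ x₀ → x₀ ≤ x₁ → h x₀ ≤ h x₁ := by
  intro x₀ x₁ h0 h01
  have key : ∀ t ∈ Set.Ioc (0:ℝ) 1, (1 - t) ^ (N - 1) * h x₀ ≤ h x₁ := by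
    intro t ht
    have hd : 0 ≤ (x₁ - x₀) / t := div_nonneg (by linarith) ht.1.le
    have h1 := hmcp x₀ h0 (x₀ + (x₁ - x₀) / t) (by simp only [Set.mem_Ici]; linarith) t
      ⟨ht.1.le, ht.2⟩
    have e : t * (x₀ + (x₁ - x₀) / t) + (1 - t) * x₀ = x₁ := by
      have := ht.1.ne'
      field_simp
      ring
    rwa [e] at h1
  have hc : ContinuousAt (fun t : ℝ => (1 - t) ^ (N - 1) * h x₀) 0 := by
    refine ContinuousAt.mul (ContinuousAt.rpow_const (by fun_prop) (Or.inl (by norm_num)))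
      continuousAt_const
  have hl : Filter.Tendsto (fun t : ℝ => (1 - t) ^ (N - 1) * h x₀)
      (nhdsWithin 0 (Set.Ioi 0)) (nhds (h x₀)) := by
    have := hc.tendsto.mono_left (nhdsWithin_le_nhds (s := Set.Ioi (0:ℝ)))
    simpa using this
  refine le_of_tendsto hl ?_
  filter_upwards [Ioc_mem_nhdsGT (show (0:ℝ) < 1 by norm_num)] with t ht
  exact key t ht
end

section
/- Let K > 0, N ∈ (1,∞), let a < b be real numbers, and let h be an MCP(K,N) density on (a,b) such that h(x₀) > 0 for some x₀ ∈ (a,b). Then h(x) > 0 for every x ∈ (a,b), and b − a ≤ π·√((N−1)/K). -/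
open Real MeasureTheory ENNReal

theorem aux_lt (K N a b : ℝ) (hN : 1 < N)
    (h : ℝ → ℝ) (hh : IsMCPDensity K N (Set.Ioo a b) h)
    (x y : ℝ) (hx : x ∈ Set.Ioo a b) (hy : y ∈ Set.Ioo a b) (hpos : 0 < h x) :
    K * |y - x| ^ 2 < (N - 1) * Real.pi ^ 2 := by
  by_contra hc
  push Not at hc
  have h1 := hh.2 x hx y hy 0 (by simp)
  have hN' : 0 < N - 1 := by linarith
  have h2 : ENNReal.ofReal (h x) ≠ 0 := by simpa using hpos
  rw [sigmaE, if_pos hc, ENNReal.top_rpow_of_pos hN', ENNReal.top_mul h2] at h1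
  exact absurd (top_le_iff.mp h1) ENNReal.ofReal_ne_top

theorem aux_pos (K N a b : ℝ) (hK : 0 < K) (hN : 1 < N)
    (h : ℝ → ℝ) (hh : IsMCPDensity K N (Set.Ioo a b) h)
    (x y t : ℝ) (hx : x ∈ Set.Ioo a b) (hy : y ∈ Set.Ioo a b) (hpos : 0 < h x)
    (hxy : y ≠ x) (ht0 : 0 ≤ t) (ht : t < 1) : 0 < h (t * y + (1 - t) * x) := by
  have hlt := aux_lt K N a b hN h hh x y hx hy hpos
  have h1 := hh.2 x hx y hy t ⟨ht0, ht.le⟩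
  have hN' : 0 < N - 1 := by linarith
  have hθ : 0 < |y - x| := abs_pos.mpr (sub_ne_zero.mpr hxy)
  have h2 : 0 < ENNReal.ofReal (h x) := by simpa using hpos
  set θ := |y - x| with hθdef
  have hs : 0 < Real.sqrt (K / (N - 1)) := Real.sqrt_pos.mpr (by positivity)
  have hsπ : θ * Real.sqrt (K / (N - 1)) < Real.pi := by
    apply lt_of_pow_lt_pow_left₀ 2 Real.pi_pos.le
    rw [mul_pow, Real.sq_sqrt (by positivity), mul_div_assoc', div_lt_iff₀ hN']
    linarith
  have hpp : 0 < θ * Real.sqrt (K / (N - 1)) := by positivity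
  have h3 : 0 < sigmaR K (N - 1) (1 - t) θ := by
    rw [sigmaR, if_pos (by positivity)]
    apply div_pos
    · apply Real.sin_pos_of_pos_of_lt_pi
      · have : 0 < 1 - t := by linarith
        positivity
      · rw [mul_assoc]; nlinarith
    · exact Real.sin_pos_of_pos_of_lt_pi hpp hsπ
  rw [sigmaE, if_neg (not_le.mpr hlt)] at h1
  have h4 : 0 < ENNReal.ofReal (sigmaR K (N - 1) (1 - t) θ) ^ (N - 1) :=
    ENNReal.rpow_pos (ENNReal.ofReal_pos.mpr h3) ENNReal.ofReal_ne_top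
  exact ENNReal.ofReal_pos.mp (lt_of_lt_of_le (ENNReal.mul_pos h4.ne' h2.ne') h1)

theorem mcp_density_pos_and_diam_bound (K N a b : ℝ) (hK : 0 < K) (hN : 1 < N)
    (hab : a < b)
    (h : ℝ → ℝ) (hh : IsMCPDensity K N (Set.Ioo a b) h)
    (x₀ : ℝ) (hx₀ : x₀ ∈ Set.Ioo a b) (hpos : 0 < h x₀) :
    (∀ x ∈ Set.Ioo a b, 0 < h x) ∧
      b - a ≤ Real.pi * Real.sqrt ((N - 1) / K) := by
  have hN' : 0 < N - 1 := by linarith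
  have main : ∀ x ∈ Set.Ioo a b, 0 < h x := by
    intro x hx
    obtain ⟨hx1, hx2⟩ := hx
    obtain ⟨h01, h02⟩ := hx₀
    have key : ∀ y ∈ Set.Ioo a b, y ≠ x₀ → 0 ≤ (x - x₀) / (y - x₀) →
        (x - x₀) / (y - x₀) < 1 → 0 < h x := by
      intro y hy hne ht0 ht1
      have := aux_pos K N a b hK hN h hh x₀ y _ ⟨h01, h02⟩ hy hpos hne ht0 ht1
      have hne' : y - x₀ ≠ 0 := sub_ne_zero.mpr hne
      have e : (x - x₀) / (y - x₀) * y + (1 - (x - x₀) / (y - x₀)) * x₀ = x := by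
        field_simp; ring
      rwa [e] at this
    rcases lt_trichotomy x x₀ with hlt | heq | hgt
    · apply key ((a + x) / 2) ⟨by linarith, by linarith⟩ (by linarith)
      · exact div_nonneg_of_nonpos (by linarith) (by linarith)
      · rw [div_lt_one_of_neg (by linarith)]; linarith
    · rw [heq]; exact hpos
    · apply key ((b + x) / 2) ⟨by linarith, by linarith⟩ (by linarith)
      · exact div_nonneg (by linarith) (by linarith)
      · rw [div_lt_one (by linarith)]; linarith
  refine ⟨main, ?_⟩
  by_contra hc
  push Not at hc
  set D := Real.pi * Real.sqrt ((N - 1) / K) with hD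
  have hD0 : 0 ≤ D := by positivity
  have hD2 : K * D ^ 2 = (N - 1) * Real.pi ^ 2 := by
    rw [hD, mul_pow, Real.sq_sqrt (by positivity)]; field_simp
  set e := (b - a - D) / 4 with he
  have hx : a + e ∈ Set.Ioo a b := ⟨by linarith, by linarith⟩
  have hy : b - e ∈ Set.Ioo a b := ⟨by linarith, by linarith⟩
  have := aux_lt K N a b hN h hh _ _ hx hy (main _ hx)
  rw [sq_abs, ← hD2] at this
  have h5 := lt_of_mul_lt_mul_left this hK.le
  have h6 := lt_of_pow_lt_pow_left₀ 2 hD0 h5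
  linarith
end

section
/- Let K > 0, N ∈ (1,∞), and let a < b be real numbers with b − a = π·√((N−1)/K). Let h be an MCP(K,N) density on (a,b) such that h(x₀) > 0 for some x₀ ∈ (a,b). Then there exists a constant c > 0 such that h(x) = c·(sin(√(K/(N−1))·(x − a)))^{N−1} for all x ∈ (a,b). -/
open Real MeasureTheory ENNReal

lemma mcp_aux (K N a b : ℝ) (hK : 0 < K) (hN : 1 < N)
    (hw : Real.sqrt (K / (N - 1)) * (b - a) = Real.pi)
    (h : ℝ → ℝ) (hh : IsMCPDensity K N (Set.Ioo a b) h)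
    (y z x : ℝ) (hy : y ∈ Set.Ioo a b) (hz : z ∈ Set.Ioo a b) (hx : x ∈ Set.Ioo a b)
    (hyz : y ≠ z) (t : ℝ) (ht : t ∈ Set.Icc (0:ℝ) 1) (hxt : x = t * z + (1 - t) * y) :
    Real.sin (Real.sqrt (K / (N - 1)) * |z - x|) ^ (N - 1) * h y
      ≤ Real.sin (Real.sqrt (K / (N - 1)) * |z - y|) ^ (N - 1) * h x := by
  obtain ⟨h0, h1⟩ := hh
  have hp : 0 < N - 1 := by linarith
  have hwpos : 0 < Real.sqrt (K / (N - 1)) := Real.sqrt_pos.mpr (by positivity)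
  have hwsq : Real.sqrt (K / (N - 1)) ^ 2 = K / (N - 1) := Real.sq_sqrt (by positivity)
  have key := h1 y hy z hz t ht
  rw [← hxt] at key
  have hd : 0 < |z - y| := abs_pos.mpr (sub_ne_zero.mpr hyz.symm)
  have hdlt : |z - y| < b - a := by
    rw [abs_lt]; constructor <;> linarith [hy.1, hy.2, hz.1, hz.2]
  have hzx : |z - x| = (1 - t) * |z - y| := by
    rw [hxt, show z - (t * z + (1 - t) * y) = (1 - t) * (z - y) by ring, abs_mul,
      abs_of_nonneg (by linarith [ht.2])]
  generalize |z - y| = d at *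
  rw [hzx]
  unfold sigmaE sigmaR at key
  generalize Real.sqrt (K / (N - 1)) = w at *
  have hwd : w * d < Real.pi := by rw [← hw]; gcongr
  have hKw : K = w ^ 2 * (N - 1) := by rw [hwsq]; field_simp
  have hnot : ¬ ((N - 1) * Real.pi ^ 2 ≤ K * d ^ 2) := by
    have : (w * d) ^ 2 < Real.pi ^ 2 := by gcongr
    rw [hKw]; nlinarith
  rw [if_neg hnot, if_pos (by positivity)] at key
  have hs : 0 < Real.sin (w * d) := Real.sin_pos_of_pos_of_lt_pi (by positivity) hwd
  have hs2 : 0 ≤ Real.sin (w * ((1 - t) * d)) := by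
    apply Real.sin_nonneg_of_nonneg_of_le_pi
    · have := ht.2
      have : 0 ≤ 1 - t := by linarith
      positivity
    · have := mul_nonneg ht.1 (mul_pos hwpos hd).le
      nlinarith
  rw [show (1 - t) * d * w = w * ((1 - t) * d) by ring, mul_comm d w] at key
  rw [ENNReal.ofReal_rpow_of_nonneg (by positivity) hp.le,
    ← ENNReal.ofReal_mul (by positivity), ENNReal.ofReal_le_ofReal_iff (h0 x hx),
    Real.div_rpow hs2 hs.le, div_mul_eq_mul_div, div_le_iff₀ (by positivity)] at key
  linarith

lemma mcp_aux2 (K N a b : ℝ) (hK : 0 < K) (hN : 1 < N)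
    (hw : Real.sqrt (K / (N - 1)) * (b - a) = Real.pi)
    (h : ℝ → ℝ) (hh : IsMCPDensity K N (Set.Ioo a b) h)
    (y x : ℝ) (hy : y ∈ Set.Ioo a b) (hx : x ∈ Set.Ioo a b) :
    Real.sin (Real.sqrt (K / (N - 1)) * (x - a)) ^ (N - 1) * h y
      ≤ Real.sin (Real.sqrt (K / (N - 1)) * (y - a)) ^ (N - 1) * h x := by
  have hp : 0 < N - 1 := by linarith
  have hc : ∀ u c : ℝ, Continuous fun z : ℝ =>
      Real.sin (Real.sqrt (K / (N - 1)) * |z - u|) ^ (N - 1) * c := fun u c =>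
    (Continuous.rpow_const (by fun_prop) (fun _ => Or.inr hp.le)).mul continuous_const
  rcases lt_trichotomy y x with hyx | rfl | hyx
  · have hr : ∀ u ∈ Set.Ioo a b, Real.sin (Real.sqrt (K / (N - 1)) * (u - a))
        = Real.sin (Real.sqrt (K / (N - 1)) * |b - u|) := by
      intro u hu
      rw [abs_of_pos (by linarith [hu.2]), ← Real.sin_pi_sub, ← hw]
      congr 1; ring
    rw [hr x hx, hr y hy]
    refine le_of_tendsto_of_tendsto (b := nhdsWithin b (Set.Iio b))
      ((hc x (h y)).continuousAt.continuousWithinAt)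
      ((hc y (h x)).continuousAt.continuousWithinAt) ?_
    filter_upwards [Ioo_mem_nhdsLT hx.2] with z hz
    have hzy : 0 < z - y := by linarith [hz.1]
    refine mcp_aux K N a b hK hN hw h hh y z x hy ⟨hx.1.trans hz.1, hz.2⟩ hx
      (by linarith) ((x - y) / (z - y)) ⟨?_, ?_⟩ ?_
    · exact div_nonneg (by linarith) hzy.le
    · rw [div_le_one hzy]; linarith [hz.1]
    · field_simp; ring
  · exact le_rfl
  · have hr : ∀ u ∈ Set.Ioo a b, Real.sin (Real.sqrt (K / (N - 1)) * (u - a))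
        = Real.sin (Real.sqrt (K / (N - 1)) * |a - u|) := by
      intro u hu
      rw [abs_sub_comm, abs_of_pos (by linarith [hu.1])]
    rw [hr x hx, hr y hy]
    refine le_of_tendsto_of_tendsto (b := nhdsWithin a (Set.Ioi a))
      ((hc x (h y)).continuousAt.continuousWithinAt)
      ((hc y (h x)).continuousAt.continuousWithinAt) ?_
    filter_upwards [Ioo_mem_nhdsGT hx.1] with z hz
    have hzy : 0 < y - z := by linarith [hz.2]
    refine mcp_aux K N a b hK hN hw h hh y z x hy ⟨hz.1, hz.2.trans hx.2⟩ hx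
      (by linarith) ((y - x) / (y - z)) ⟨?_, ?_⟩ ?_
    · exact div_nonneg (by linarith) hzy.le
    · rw [div_le_one hzy]; linarith [hz.2]
    · field_simp; ring

theorem mcp_density_maximal_diameter_rigidity (K N a b : ℝ) (hK : 0 < K) (hN : 1 < N)
    (hab : a < b) (hdiam : b - a = Real.pi * Real.sqrt ((N - 1) / K))
    (h : ℝ → ℝ) (hh : IsMCPDensity K N (Set.Ioo a b) h)
    (x₀ : ℝ) (hx₀ : x₀ ∈ Set.Ioo a b) (hpos : 0 < h x₀) :
    ∃ c > (0:ℝ), ∀ x ∈ Set.Ioo a b,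
      h x = c * Real.sin (Real.sqrt (K / (N - 1)) * (x - a)) ^ (N - 1) := by
  have hp : 0 < N - 1 := by linarith
  have hwpos : 0 < Real.sqrt (K / (N - 1)) := Real.sqrt_pos.mpr (by positivity)
  have hw : Real.sqrt (K / (N - 1)) * (b - a) = Real.pi := by
    rw [hdiam, mul_left_comm, ← Real.sqrt_mul (by positivity)]
    rw [show K / (N - 1) * ((N - 1) / K) = 1 by field_simp]
    simp
  have hS : 0 < Real.sin (Real.sqrt (K / (N - 1)) * (x₀ - a)) ^ (N - 1) := by
    apply Real.rpow_pos_of_pos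
    apply Real.sin_pos_of_pos_of_lt_pi
    · exact mul_pos hwpos (by linarith [hx₀.1])
    · rw [← hw]
      exact mul_lt_mul_of_pos_left (by linarith [hx₀.2]) hwpos
  refine ⟨h x₀ / Real.sin (Real.sqrt (K / (N - 1)) * (x₀ - a)) ^ (N - 1),
    div_pos hpos hS, fun x hx => ?_⟩
  have e1 := mcp_aux2 K N a b hK hN hw h hh x₀ x hx₀ hx
  have e2 := mcp_aux2 K N a b hK hN hw h hh x x₀ hx hx₀
  rw [div_mul_eq_mul_div, eq_div_iff hS.ne']
  linarith
end

section
/- Let (X,d) be a proper geodesic metric space containing a line γ : ℝ → X, and let b⁺(x) := lim_{t → +∞} (d(x, γ(t)) − t) be the associated Busemann function. Then for every x ∈ X and every s > 0 there exists y ∈ X with d(x,y) = s and b⁺(x) − b⁺(y) = s. In particular, every point of X belongs to the transport set T_{b⁺} = {x ∈ X : ∃ y ≠ x with |b⁺(x) − b⁺(y)| = d(x,y)}, i.e. T_{b⁺} = X. -/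
theorem busemann_transport_set_is_everything {X : Type*} [MetricSpace X] [ProperSpace X]
    (hgeodesic : ∀ x y : X, ∃ c : ℝ → X, c 0 = x ∧ c 1 = y ∧
      ∀ s ∈ Set.Icc (0:ℝ) 1, ∀ t ∈ Set.Icc (0:ℝ) 1,
        dist (c s) (c t) = |s - t| * dist x y)
    (γ : ℝ → X) (hγ : ∀ s t : ℝ, dist (γ s) (γ t) = |s - t|)
    (B : X → ℝ)
    (hB : ∀ x : X,
      Filter.Tendsto (fun t => dist x (γ t) - t) Filter.atTop (nhds (B x))) :
    (∀ x : X, ∀ s : ℝ, 0 < s → ∃ y : X, dist x y = s ∧ B x - B y = s) ∧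
    ∀ x : X, ∃ y : X, y ≠ x ∧ |B x - B y| = dist x y := by
  have main : ∀ x : X, ∀ s : ℝ, 0 < s → ∃ y : X, dist x y = s ∧ B x - B y = s := by
    intro x s hs
    have h1 : ∀ n : ℕ, ∃ y : X, dist x y = s ∧
        dist y (γ (n + (s + dist x (γ 0)))) = dist x (γ (n + (s + dist x (γ 0)))) - s := by
      intro n
      set T : ℝ := n + (s + dist x (γ 0)) with hT
      have hn : (0:ℝ) ≤ n := Nat.cast_nonneg n
      have hd0 : 0 ≤ dist x (γ 0) := dist_nonneg
      have hT0 : 0 ≤ T := by positivity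
      have hD : s ≤ dist x (γ T) := by
        have h := dist_triangle (γ 0) x (γ T)
        rw [hγ, zero_sub, abs_neg, abs_of_nonneg hT0, dist_comm (γ 0) x] at h
        linarith
      have hDpos : 0 < dist x (γ T) := lt_of_lt_of_le hs hD
      obtain ⟨c, c0, c1, hc⟩ := hgeodesic x (γ T)
      have hr0 : 0 ≤ s / dist x (γ T) := by positivity
      have hr1 : s / dist x (γ T) ≤ 1 := (div_le_one hDpos).2 hD
      refine ⟨c (s / dist x (γ T)), ?_, ?_⟩
      · have h := hc 0 (by simp) _ ⟨hr0, hr1⟩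
        rw [c0, zero_sub, abs_neg, abs_of_nonneg hr0] at h
        rw [h]
        field_simp
      · have h := hc _ ⟨hr0, hr1⟩ 1 (by simp)
        rw [c1, abs_sub_comm, abs_of_nonneg (by linarith)] at h
        rw [h]
        field_simp
    choose y hy1 hy2 using h1
    obtain ⟨z, -, φ, hφ, hz⟩ := (isCompact_closedBall x s).tendsto_subseq
      (x := y) (fun n => by rw [Metric.mem_closedBall, dist_comm]; exact (hy1 n).le)
    have ht : Filter.Tendsto (fun k => ((φ k : ℕ) : ℝ) + (s + dist x (γ 0)))
        Filter.atTop Filter.atTop :=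
      Filter.tendsto_atTop_add_const_right _ _
        (tendsto_natCast_atTop_atTop.comp hφ.tendsto_atTop)
    have hxz : dist x z = s := by
      have h := (tendsto_const_nhds (x := x)).dist hz
      refine tendsto_nhds_unique h ?_
      simp only [Function.comp, hy1]
      exact tendsto_const_nhds
    refine ⟨z, hxz, le_antisymm ?_ ?_⟩
    · refine le_of_tendsto ((hB x).sub (hB z)) (Filter.Eventually.of_forall fun t => ?_)
      have := dist_triangle x z (γ t)
      linarith
    · have hd : Filter.Tendsto (fun k => s - dist z (y (φ k))) Filter.atTop (nhds (s - 0)) := by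
        have h := (tendsto_const_nhds (x := z)).dist hz
        rw [dist_self] at h
        exact tendsto_const_nhds.sub h
      rw [sub_zero] at hd
      refine le_of_tendsto_of_tendsto' hd (((hB x).comp ht).sub ((hB z).comp ht)) fun k => ?_
      have h := dist_triangle z (y (φ k)) (γ ((φ k : ℕ) + (s + dist x (γ 0))))
      have h2 := hy2 (φ k)
      simp only [Function.comp]
      linarith
  refine ⟨main, fun x => ?_⟩
  obtain ⟨y, h1, h2⟩ := main x 1 one_pos
  refine ⟨y, ?_, ?_⟩
  · rintro rfl
    simp at h1
  · rw [h1, h2, abs_one]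
end

section
/- Let K ∈ ℝ, N ∈ (1,∞), let I ⊆ ℝ be an open interval, and let h : I → (0,∞) be a CD(K,N) density on I. Then the set D ⊆ I of points where h is differentiable has at-most-countable complement in I, and for all x, y ∈ D with x < y the following integrated Riccati (Bochner-type) inequality holds: (log h)′(x) − (log h)′(y) ≥ K·(y − x) + (1/(N−1))·∫_x^y ((log h)′(s))² ds, where (log h)′ = h′/h is defined a.e. on I and the integral is finite. -/
open Real MeasureTheory ENNReal

/-- `h` is a `CD(K,N)` density on the interval `I ⊆ ℝ`: `h` is nonnegative on `I` and
`h((1−t)x₀ + t x₁)^{1/(N−1)} ≥ σ_{K,N−1}^{(1−t)}(|x₁−x₀|)·h(x₀)^{1/(N−1)} +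
σ_{K,N−1}^{(t)}(|x₁−x₀|)·h(x₁)^{1/(N−1)}` for all `x₀, x₁ ∈ I`, `t ∈ [0,1]`.
The inequality is formulated in `ℝ≥0∞` so that an infinite coefficient forces the
corresponding density value to vanish. -/
def IsCDDensity (K N : ℝ) (I : Set ℝ) (h : ℝ → ℝ) : Prop :=
  (∀ x ∈ I, 0 ≤ h x) ∧
  ∀ x₀ ∈ I, ∀ x₁ ∈ I, ∀ t ∈ Set.Icc (0:ℝ) 1,
    sigmaE K (N - 1) (1 - t) |x₁ - x₀| * ENNReal.ofReal (h x₀ ^ (1 / (N - 1)))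
      + sigmaE K (N - 1) t |x₁ - x₀| * ENNReal.ofReal (h x₁ ^ (1 / (N - 1)))
      ≤ ENNReal.ofReal (h ((1 - t) * x₀ + t * x₁) ^ (1 / (N - 1)))


open Set Filter Topology in
lemma convex_countable_aux {J : Set ℝ} (hJ : IsOpen J) {F : ℝ → ℝ} (hF : ConvexOn ℝ J F) :
    (J \ {x | DifferentiableAt ℝ F x}).Countable := by
  have hm := hF.monotoneOn_rightDeriv
  rw [hJ.interior_eq] at hm
  refine hm.countable_not_continuousWithinAt.mono ?_
  rintro x ⟨hx, hnd⟩
  refine ⟨hx, fun hc => hnd ?_⟩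
  have hxi : x ∈ interior J := by rwa [hJ.interior_eq]
  have hle : derivWithin F (Ioi x) x ≤ derivWithin F (Iio x) x := by
    have hc' := (hc.continuousAt (hJ.mem_nhds hx)).tendsto
    have hc2 : Tendsto (fun z => derivWithin F (Ioi z) z) (𝓝[<] x) (𝓝 (derivWithin F (Ioi x) x)) :=
      hc'.mono_left nhdsWithin_le_nhds
    refine le_of_tendsto hc2 ?_
    filter_upwards [self_mem_nhdsWithin, mem_nhdsWithin_of_mem_nhds (hJ.mem_nhds hx)] with z hz hzJ
    have hzi : z ∈ interior J := by rwa [hJ.interior_eq]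
    exact (hF.rightDeriv_le_slope_of_mem_interior hzi hx hz).trans
      (hF.slope_le_leftDeriv_of_mem_interior hzJ hxi hz)
  have heq := le_antisymm hle (hF.leftDeriv_le_rightDeriv_of_mem_interior hxi)
  have h1 := hF.hasDerivWithinAt_rightDeriv_of_mem_interior hxi
  have h2 := hF.hasDerivWithinAt_leftDeriv_of_mem_interior hxi
  rw [← heq] at h2
  have h3 : HasDerivAt F (derivWithin F (Ioi x) x) x := by
    rw [hasDerivAt_iff_tendsto_slope_left_right]
    rw [hasDerivWithinAt_iff_tendsto_slope' (by simp)] at h1 h2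
    exact ⟨h2, h1⟩
  exact h3.differentiableAt

open Set Filter Topology in
lemma deriv_nonneg_right_aux {φ : ℝ → ℝ} {d a b : ℝ} (hab : a < b) (hd : HasDerivAt φ d a)
    (h0 : φ a = 0) (hp : ∀ x ∈ Ioo a b, 0 ≤ φ x) : 0 ≤ d := by
  have h1 := (hasDerivAt_iff_tendsto_slope_left_right.1 hd).2
  refine ge_of_tendsto h1 ?_
  filter_upwards [Ioo_mem_nhdsGT hab] with x hx
  rw [slope_def_field, h0]
  exact div_nonneg (by linarith [hp x hx]) (by linarith [hx.1])

open Set Filter Topology in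
lemma deriv_nonpos_left_aux {φ : ℝ → ℝ} {d a b : ℝ} (hab : a < b) (hd : HasDerivAt φ d b)
    (h0 : φ b = 0) (hp : ∀ x ∈ Ioo a b, 0 ≤ φ x) : d ≤ 0 := by
  have h1 := (hasDerivAt_iff_tendsto_slope_left_right.1 hd).1
  refine le_of_tendsto h1 ?_
  filter_upwards [Ioo_mem_nhdsLT hab] with x hx
  rw [slope_def_field, h0]
  exact div_nonpos_of_nonneg_of_nonpos (by linarith [hp x hx]) (by linarith [hx.2])

lemma tangent_right_aux {S C f : ℝ → ℝ} {x₀ x₁ f' : ℝ} (hS : ∀ θ, HasDerivAt S (C θ) θ)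
    (hS0 : S 0 = 0) (hC0 : C 0 = 1) (h01 : x₀ < x₁) (hf : HasDerivAt f f' x₀)
    (h3 : ∀ x ∈ Set.Ioo x₀ x₁, S (x₁ - x) * f x₀ + S (x - x₀) * f x₁ ≤ S (x₁ - x₀) * f x) :
    f x₁ ≤ C (x₁ - x₀) * f x₀ + S (x₁ - x₀) * f' := by
  have e1 : HasDerivAt (fun x => S (x₁ - x)) (-C (x₁ - x₀)) x₀ := by
    exact (hS (x₁ - x₀)).comp_const_sub x₁ x₀
  have e2 : HasDerivAt (fun x => S (x - x₀)) 1 x₀ := by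
    have := (hS (x₀ - x₀)).comp_sub_const x₀ x₀
    rwa [sub_self, hC0] at this
  have hd := ((hf.const_mul (S (x₁ - x₀))).sub (e1.mul_const (f x₀))).sub (e2.mul_const (f x₁))
  have := deriv_nonneg_right_aux h01 hd (by simp [hS0])
    (fun x hx => by have := h3 x hx; simp only [Pi.sub_apply]; linarith)
  linarith

lemma tangent_left_aux {S C f : ℝ → ℝ} {x₀ x₁ f' : ℝ} (hS : ∀ θ, HasDerivAt S (C θ) θ)
    (hS0 : S 0 = 0) (hC0 : C 0 = 1) (h01 : x₀ < x₁) (hf : HasDerivAt f f' x₁)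
    (h3 : ∀ x ∈ Set.Ioo x₀ x₁, S (x₁ - x) * f x₀ + S (x - x₀) * f x₁ ≤ S (x₁ - x₀) * f x) :
    f x₀ ≤ C (x₁ - x₀) * f x₁ - S (x₁ - x₀) * f' := by
  have e1 : HasDerivAt (fun x => S (x₁ - x)) (-1) x₁ := by
    have := (hS (x₁ - x₁)).comp_const_sub x₁ x₁
    rwa [sub_self, hC0] at this
  have e2 : HasDerivAt (fun x => S (x - x₀)) (C (x₁ - x₀)) x₁ := by
    exact (hS (x₁ - x₀)).comp_sub_const x₁ x₀
  have hd := ((hf.const_mul (S (x₁ - x₀))).sub (e1.mul_const (f x₀))).sub (e2.mul_const (f x₁))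
  have := deriv_nonpos_left_aux h01 hd (by simp [hS0])
    (fun x hx => by have := h3 x hx; simp only [Pi.sub_apply]; linarith)
  linarith

lemma riccati_two_point_aux {κ S C f0 f1 g0 g1 : ℝ} (h0 : 0 < f0) (h1 : 0 < f1) (hS : 0 < S)
    (hCS : C ^ 2 + κ * S ^ 2 = 1) (hr : f1 ≤ f0 * (C + S * g0)) (hl : f0 ≤ f1 * (C - S * g1)) :
    S * (κ + g0 * g1) ≤ C * (g0 - g1) := by
  have p0 : 0 < f0 * (C + S * g0) := h1.trans_le hr
  have hm : f1 * f0 ≤ (f0 * (C + S * g0)) * (f1 * (C - S * g1)) :=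
    mul_le_mul hr hl h0.le p0.le
  have hm2 : (f0 * f1) * 1 ≤ (f0 * f1) * ((C + S * g0) * (C - S * g1)) := by nlinarith
  have hm3 := le_of_mul_le_mul_left hm2 (mul_pos h0 h1)
  have : S * (S * (κ + g0 * g1)) ≤ S * (C * (g0 - g1)) := by nlinarith
  exact le_of_mul_le_mul_left this hS

open Set Filter Topology in
lemma riccati_core_aux {κ δ : ℝ} {I D : Set ℝ} {g S C : ℝ → ℝ} (hI : IsOpen I)
    (hIc : I.OrdConnected) (hD : (I \ D).Countable) (hδ : 0 < δ)
    (hS : ∀ θ, HasDerivAt S (C θ) θ) (hCc : ContinuousAt C 0)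
    (hS0 : S 0 = 0) (hC0 : C 0 = 1)
    (hSp : ∀ θ, 0 < θ → θ < δ → 0 < S θ) (hCp : ∀ θ, 0 < θ → θ < δ → 0 < C θ)
    (hlow : ∀ a ∈ I, ∀ b ∈ I, a ∈ D → a < b → b - a < δ → -C (b - a) ≤ S (b - a) * g a)
    (hup : ∀ a ∈ I, ∀ b ∈ I, b ∈ D → a < b → b - a < δ → S (b - a) * g b ≤ C (b - a))
    (hric : ∀ a ∈ I, ∀ b ∈ I, a ∈ D → b ∈ D → a < b → b - a < δ →
      S (b - a) * (κ + g a * g b) ≤ C (b - a) * (g a - g b))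
    {x y : ℝ} (hx : x ∈ I) (hy : y ∈ I) (hxD : x ∈ D) (hyD : y ∈ D) (hxy : x < y)
    (hmeas : AEStronglyMeasurable g (volume.restrict (Set.uIoc x y))) :
    IntervalIntegrable (fun s => g s ^ 2) volume x y ∧
      κ * (y - x) + ∫ s in x..y, g s ^ 2 ≤ g x - g y := by
  have hsub : Icc x y ⊆ I := hIc.out hx hy
  -- uniform bound
  obtain ⟨L, hL⟩ : ∃ L, ∀ s ∈ Icc x y, s ∈ D → |g s| ≤ L := by
    obtain ⟨r1, hr1, hb1⟩ := Metric.isOpen_iff.1 hI x hx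
    obtain ⟨r2, hr2, hb2⟩ := Metric.isOpen_iff.1 hI y hy
    set ε := min δ (min r1 r2) / 2 with hε
    have hm : 0 < min δ (min r1 r2) := by positivity
    have hε0 : 0 < ε := by positivity
    have hεm : ε < min δ (min r1 r2) := by rw [hε]; linarith
    have hεδ : ε < δ := hεm.trans_le (min_le_left _ _)
    have hε1 : ε < r1 := hεm.trans_le ((min_le_right _ _).trans (min_le_left _ _))
    have hε2 : ε < r2 := hεm.trans_le ((min_le_right _ _).trans (min_le_right _ _))
    have hxI : x - ε ∈ I := hb1 (by simp [abs_of_pos hε0, hε1])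
    have hyI : y + ε ∈ I := hb2 (by simp [abs_of_pos hε0, hε2])
    have hbig : Icc (x - ε) (y + ε) ⊆ I := hIc.out hxI hyI
    have hSe := hSp ε hε0 hεδ
    refine ⟨C ε / S ε, fun s hs hsD => abs_le.2 ⟨?_, ?_⟩⟩
    · have := hlow s (hsub hs) (s + ε) (hbig ⟨by linarith [hs.1], by linarith [hs.2]⟩) hsD
        (by linarith) (by simpa using hεδ)
      rw [add_sub_cancel_left] at this
      rw [← neg_div, div_le_iff₀ hSe]; linarith
    · have := hup (s - ε) (hbig ⟨by linarith [hs.1], by linarith [hs.2]⟩) s (hsub hs) hsD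
        (by linarith) (by simpa using hεδ)
      rw [_root_.sub_sub_cancel] at this
      rw [le_div_iff₀ hSe]; linarith
  have hL0 : 0 ≤ L := (abs_nonneg _).trans (hL x ⟨le_rfl, hxy.le⟩ hxD)
  -- tangent quotient
  have hT : Tendsto (fun θ => S θ / C θ / θ) (𝓝[>] 0) (𝓝 1) := by
    have h1 := (hasDerivAt_iff_tendsto_slope_left_right.1 (hS 0)).2
    rw [hC0] at h1
    have h2 : Tendsto C (𝓝[>] 0) (𝓝 1) := by
      have := hCc.tendsto.mono_left (nhdsWithin_le_nhds (s := Ioi 0)); rwa [hC0] at this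
    have h3 := h1.div h2 one_ne_zero
    rw [div_one] at h3
    refine h3.congr fun θ => ?_
    simp only [Pi.div_apply, slope_def_field, hS0, sub_zero]
    rw [div_right_comm]
  obtain ⟨η, hη, hTη⟩ : ∃ η > 0, ∀ θ, 0 < θ → θ < η → S θ / C θ ≤ 2 * θ := by
    have := hT.eventually (gt_mem_nhds (show (1:ℝ) < 2 by norm_num))
    obtain ⟨η, hη, hs⟩ := (mem_nhdsGT_iff_exists_Ioo_subset).1 this
    refine ⟨η, hη, fun θ h1 h2 => ?_⟩
    have h3 : S θ / C θ / θ < 2 := hs ⟨h1, h2⟩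
    rw [div_lt_iff₀ h1] at h3; linarith
  have hric' : ∀ a ∈ I, ∀ b ∈ I, a ∈ D → b ∈ D → a < b → b - a < δ →
      S (b - a) / C (b - a) * (κ + g a * g b) ≤ g a - g b := by
    intro a ha b hb haD hbD hab hlt
    have hc := hCp (b - a) (by linarith) hlt
    rw [div_mul_eq_mul_div, div_le_iff₀ hc]
    linarith [hric a ha b hb haD hbD hab hlt]
  set A := 2 * (|κ| + L ^ 2) with hA
  have hA0 : 0 ≤ A := by positivity
  set δ' := min δ η with hδ'
  have hδ'0 : 0 < δ' := lt_min hδ hη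
  have hloc : ∀ a ∈ Icc x y, ∀ b ∈ Icc x y, a ∈ D → b ∈ D → a < b → b - a < δ' →
      g b + A * b * (-1) ≤ g a + A * a * (-1) := by
    intro a ha b hb haD hbD hab hlt
    have h1 := hric' a (hsub ha) b (hsub hb) haD hbD hab (hlt.trans_le (min_le_left _ _))
    have h2 := hTη (b - a) (by linarith) (hlt.trans_le (min_le_right _ _))
    have h3 : 0 < S (b - a) / C (b - a) := div_pos
      (hSp _ (by linarith) (hlt.trans_le (min_le_left _ _)))
      (hCp _ (by linarith) (hlt.trans_le (min_le_left _ _)))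
    have h4 : -(|κ| + L ^ 2) ≤ κ + g a * g b := by
      have h5 : |g a * g b| ≤ L * L := by
        rw [abs_mul]; exact mul_le_mul (hL a ha haD) (hL b hb hbD) (abs_nonneg _) hL0
      have := neg_abs_le (g a * g b)
      have := neg_abs_le κ
      nlinarith
    have h6 : 0 ≤ |κ| + L ^ 2 := by positivity
    nlinarith
  have hdense : ∀ a b, x ≤ a → b ≤ y → a < b → ∃ c ∈ D, a < c ∧ c < b := by
    intro a b ha hb hab
    obtain ⟨c, hc, hc2⟩ := (hD.dense_compl ℝ).exists_mem_open isOpen_Ioo (nonempty_Ioo.2 hab)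
    refine ⟨c, ?_, hc2.1, hc2.2⟩
    by_contra hcD
    exact hc ⟨hsub ⟨by linarith [hc2.1], by linarith [hc2.2]⟩, hcD⟩
  have hchain : ∀ n : ℕ, ∀ a ∈ Icc x y, ∀ b ∈ Icc x y, a ∈ D → b ∈ D → a < b →
      b - a < δ' * 2 ^ n → g b + A * b * (-1) ≤ g a + A * a * (-1) := by
    intro n
    induction n with
    | zero => simpa using hloc
    | succ n ih =>
      intro a ha b hb haD hbD hab hlt
      have hp : 0 < δ' * 2 ^ n := by positivity
      rw [pow_succ] at hlt
      obtain ⟨c, hcD, hc1, hc2⟩ := hdense (max a (b - δ' * 2 ^ n)) (min b (a + δ' * 2 ^ n))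
        (ha.1.trans (le_max_left _ _)) ((min_le_left _ _).trans hb.2)
        (max_lt (lt_min hab (by linarith)) (lt_min (by linarith) (by linarith)))
      have q1 := (le_max_left _ _).trans_lt hc1
      have q2 := (le_max_right _ _).trans_lt hc1
      have q3 := hc2.trans_le (min_le_left _ _)
      have q4 := hc2.trans_le (min_le_right _ _)
      have hcI : c ∈ Icc x y := ⟨by linarith [ha.1], by linarith [hb.2]⟩
      exact (ih c hcI b hb hcD hbD q3 (by linarith)).trans
        (ih a ha c hcI haD hcD q1 (by linarith))
  have hmono : MonotoneOn (fun s => A * s - g s) (Icc x y ∩ D) := by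
    rintro a ⟨ha, haD⟩ b ⟨hb, hbD⟩ hab
    rcases hab.eq_or_lt with rfl | hab
    · exact le_rfl
    obtain ⟨n, hn⟩ := pow_unbounded_of_one_lt ((b - a) / δ') (one_lt_two)
    rw [div_lt_iff₀ hδ'0] at hn
    have := hchain n a ha b hb haD hbD hab (by linarith)
    simp only; linarith
  have hxm : x ∈ Icc x y ∩ D := ⟨⟨le_rfl, hxy.le⟩, hxD⟩
  have hym : y ∈ Icc x y ∩ D := ⟨⟨hxy.le, le_rfl⟩, hyD⟩
  obtain ⟨m, hm, hme⟩ := hmono.exists_monotone_extension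
    ⟨_, by rintro _ ⟨s, hs, rfl⟩; exact hmono hxm hs hs.1.1⟩
    ⟨_, by rintro _ ⟨s, hs, rfl⟩; exact hmono hs hym hs.1.2⟩
  have hgm : ∀ s ∈ Icc x y ∩ D, g s = A * s - m s := fun s hs => by
    have := hme hs; simp only at this; linarith
  have hkey : ∀ s ∈ Ioo x y, s ∈ D → DifferentiableAt ℝ m s → g s ^ 2 ≤ deriv m s + (-κ - A) := by
    intro s hs hsD hds
    have hsm : s ∈ Icc x y ∩ D := ⟨⟨hs.1.le, hs.2.le⟩, hsD⟩
    have hne : (𝓝[D ∩ Ioo s y] s).NeBot := by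
      rw [← mem_closure_iff_nhdsWithin_neBot, Metric.mem_closure_iff]
      intro ε hε
      obtain ⟨c, hcD, hc1, hc2⟩ := hdense s (min y (s + ε)) hs.1.le (min_le_left _ _)
        (lt_min hs.2 (by linarith))
      refine ⟨c, ⟨hcD, hc1, hc2.trans_le (min_le_left _ _)⟩, ?_⟩
      have := hc2.trans_le (min_le_right _ _)
      rw [Real.dist_eq, abs_sub_comm, abs_of_pos (by linarith)]; linarith
    have hle1 : 𝓝[D ∩ Ioo s y] s ≤ 𝓝[>] s := nhdsWithin_mono _ (fun c hc => hc.2.1)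
    have l1 : Tendsto (slope m s) (𝓝[D ∩ Ioo s y] s) (𝓝 (deriv m s)) :=
      (hasDerivAt_iff_tendsto_slope_left_right.1 hds.hasDerivAt).2.mono_left hle1
    have l2 : Tendsto (fun b => S (b - s) / C (b - s) / (b - s)) (𝓝[D ∩ Ioo s y] s) (𝓝 1) := by
      refine hT.comp ?_
      refine tendsto_nhdsWithin_iff.2 ⟨?_, ?_⟩
      · have : Tendsto (fun b => b - s) (𝓝 s) (𝓝 (s - s)) := by
          exact (continuous_id.sub continuous_const).tendsto s
        rw [sub_self] at this
        exact this.mono_left nhdsWithin_le_nhds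
      · filter_upwards [self_mem_nhdsWithin] with b hb
        exact sub_pos.2 hb.2.1
    have l3 : Tendsto (fun b => A * b - m b) (𝓝[D ∩ Ioo s y] s) (𝓝 (g s)) := by
      rw [hgm s hsm]
      have : ContinuousAt (fun b => A * b - m b) s :=
        (continuousAt_const.mul continuousAt_id).sub hds.continuousAt
      exact this.tendsto.mono_left nhdsWithin_le_nhds
    have l4 := l2.mul ((l3.const_mul (g s)).const_add κ)
    have l5 : Tendsto (fun b => slope m s b + (-A)) (𝓝[D ∩ Ioo s y] s) (𝓝 (deriv m s + (-A))) :=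
      l1.add_const _
    have := le_of_tendsto_of_tendsto l4 l5 ?_
    · nlinarith
    filter_upwards [self_mem_nhdsWithin,
      mem_nhdsWithin_of_mem_nhds (Iio_mem_nhds (show s < s + δ by linarith))] with b hb hbδ
    have hbm : b ∈ Icc x y ∩ D := ⟨⟨by linarith [hs.1, hb.2.1], hb.2.2.le⟩, hb.1⟩
    have hbs : 0 < b - s := sub_pos.2 hb.2.1
    have hr := hric' s (hsub hsm.1) b (hsub hbm.1) hsD hb.1 hb.2.1 (by linarith [show b < s + δ from hbδ])
    rw [slope_def_field, ← hgm b hbm]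
    have e1 : (m b - m s) / (b - s) + -A = (g s - g b) / (b - s) := by
      rw [hgm s hsm, hgm b hbm]; field_simp; ring
    rw [e1, div_mul_eq_mul_div]
    gcongr
  have hint : IntervalIntegrable (deriv m) volume x y := (hm.monotoneOn _).intervalIntegrable_deriv
  have hle : ∫ s in x..y, deriv m s ≤ m y - m x := by
    have := (hm.monotoneOn (uIcc x y)).intervalIntegral_deriv_mem_uIcc
    rw [uIcc_of_le (by linarith [hm hxy.le])] at this
    exact this.2
  have hae : ∀ᵐ s ∂(volume.restrict (Set.uIoc x y)), g s ^ 2 ≤ deriv m s + (-κ - A) := by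
    rw [ae_restrict_iff' measurableSet_uIoc]
    have hny : ∀ᵐ s : ℝ, s ≠ y := by simp [ae_iff, measure_singleton]
    have hnD : ∀ᵐ s : ℝ, s ∉ I \ D := hD.ae_notMem _
    filter_upwards [hm.ae_differentiableAt, hny, hnD] with s h1 h2 h3 h4
    rw [uIoc_of_le hxy.le] at h4
    have hsI : s ∈ I := hsub ⟨h4.1.le, h4.2⟩
    have hsD : s ∈ D := by by_contra hh; exact h3 ⟨hsI, hh⟩
    linarith [hkey s ⟨h4.1, lt_of_le_of_ne h4.2 h2⟩ hsD h1]
  have hint2 : IntervalIntegrable (fun s => deriv m s + (-κ - A)) volume x y :=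
    hint.add intervalIntegrable_const
  have hg2 : IntervalIntegrable (fun s => g s ^ 2) volume x y := by
    refine hint2.mono_fun (hmeas.pow 2) ?_
    filter_upwards [hae] with s hs
    rw [Real.norm_of_nonneg (sq_nonneg _)]
    exact hs.trans (le_abs_self _)
  refine ⟨hg2, ?_⟩
  have hfin := intervalIntegral.integral_mono_ae_restrict hxy.le hg2 hint2 (by
    rw [uIoc_of_le hxy.le] at hae
    rw [← Measure.restrict_congr_set Ioc_ae_eq_Icc]
    exact hae)
  rw [intervalIntegral.integral_add hint intervalIntegrable_const] at hfin
  simp only [intervalIntegral.integral_const, smul_eq_mul] at hfin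
  have e1 := hgm x hxm
  have e2 := hgm y hym
  nlinarith

lemma cd_extract_aux {K N : ℝ} (hN : 1 < N) {I : Set ℝ} {h : ℝ → ℝ}
    (hpos : ∀ x ∈ I, 0 < h x) (hIc : I.OrdConnected) (hcd : IsCDDensity K N I h) {x₀ x₁ t : ℝ}
    (h0 : x₀ ∈ I) (h1 : x₁ ∈ I) (h01 : x₀ < x₁) (ht : t ∈ Set.Icc (0:ℝ) 1) :
    K * (x₁ - x₀) ^ 2 < (N - 1) * Real.pi ^ 2 ∧
    sigmaR K (N - 1) (1 - t) (x₁ - x₀) * h x₀ ^ (1 / (N - 1))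
      + sigmaR K (N - 1) t (x₁ - x₀) * h x₁ ^ (1 / (N - 1))
      ≤ h ((1 - t) * x₀ + t * x₁) ^ (1 / (N - 1)) := by
  have hc := hcd.2 x₀ h0 x₁ h1 t ht
  rw [abs_of_pos (sub_pos.2 h01)] at hc
  have f0 : 0 < h x₀ ^ (1 / (N - 1)) := Real.rpow_pos_of_pos (hpos _ h0) _
  have f1 : 0 < h x₁ ^ (1 / (N - 1)) := Real.rpow_pos_of_pos (hpos _ h1) _
  have hxI : (1 - t) * x₀ + t * x₁ ∈ I :=
    hIc.out h0 h1 ⟨by nlinarith [ht.1, ht.2], by nlinarith [ht.1, ht.2]⟩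
  have fx : 0 < h ((1 - t) * x₀ + t * x₁) ^ (1 / (N - 1)) := Real.rpow_pos_of_pos (hpos _ hxI) _
  have hlt : ¬ ((N - 1) * Real.pi ^ 2 ≤ K * (x₁ - x₀) ^ 2) := by
    intro hle
    simp only [sigmaE, if_pos hle] at hc
    rw [ENNReal.top_mul (by simpa using f0), top_add] at hc
    exact ENNReal.ofReal_ne_top (top_le_iff.1 hc)
  refine ⟨not_le.1 hlt, ?_⟩
  simp only [sigmaE, if_neg hlt] at hc
  rw [← ENNReal.ofReal_mul' f0.le, ← ENNReal.ofReal_mul' f1.le] at hc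
  exact (ENNReal.ofReal_le_ofReal_iff fx.le).1 (ENNReal.ofReal_add_le.trans hc)

lemma cd_sin_aux {K N : ℝ} (hN : 1 < N) (hK : 0 < K) {I : Set ℝ} {h : ℝ → ℝ}
    (hpos : ∀ x ∈ I, 0 < h x) (hIc : I.OrdConnected) (hcd : IsCDDensity K N I h) {x₀ x₁ : ℝ}
    (h0 : x₀ ∈ I) (h1 : x₁ ∈ I) (h01 : x₀ < x₁) :
    (x₁ - x₀) * √(K / (N - 1)) < Real.pi := by
  have := (cd_extract_aux hN hpos hIc hcd h0 h1 h01 (t := 0) (by simp)).1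
  have hn : 0 < N - 1 := by linarith
  have hs : √(K / (N - 1)) ^ 2 = K / (N - 1) := Real.sq_sqrt (by positivity)
  refine lt_of_pow_lt_pow_left₀ 2 Real.pi_pos.le ?_
  rw [mul_pow, hs, mul_div_assoc', div_lt_iff₀ hn]
  linarith

lemma cd_pos_three_aux {K N : ℝ} (hN : 1 < N) (hK : 0 < K) {I : Set ℝ} {h : ℝ → ℝ}
    (hpos : ∀ x ∈ I, 0 < h x) (hIc : I.OrdConnected) (hcd : IsCDDensity K N I h) {x₀ x₁ x : ℝ}
    (h0 : x₀ ∈ I) (h1 : x₁ ∈ I) (hx : x ∈ Set.Ioo x₀ x₁) :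
    Real.sin (√(K / (N - 1)) * (x₁ - x)) * h x₀ ^ (1 / (N - 1))
      + Real.sin (√(K / (N - 1)) * (x - x₀)) * h x₁ ^ (1 / (N - 1))
      ≤ Real.sin (√(K / (N - 1)) * (x₁ - x₀)) * h x ^ (1 / (N - 1)) := by
  have h01 : x₀ < x₁ := hx.1.trans hx.2
  have hd : 0 < x₁ - x₀ := sub_pos.2 h01
  have hn : 0 < N - 1 := by linarith
  have hpi := cd_sin_aux hN hK hpos hIc hcd h0 h1 h01
  have ha : 0 < √(K / (N - 1)) := Real.sqrt_pos.2 (by positivity)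
  have hsin : 0 < Real.sin ((x₁ - x₀) * √(K / (N - 1))) :=
    Real.sin_pos_of_pos_of_lt_pi (by positivity) hpi
  have ht : (x - x₀) / (x₁ - x₀) ∈ Set.Icc (0:ℝ) 1 :=
    ⟨div_nonneg (by linarith [hx.1]) hd.le, (div_le_one hd).2 (by linarith [hx.2])⟩
  have hc := (cd_extract_aux hN hpos hIc hcd h0 h1 h01 ht).2
  have e1 : (1 - (x - x₀) / (x₁ - x₀)) * (x₁ - x₀) = x₁ - x := by field_simp; ring
  have e2 : (x - x₀) / (x₁ - x₀) * (x₁ - x₀) = x - x₀ := by field_simp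
  have e3 : (1 - (x - x₀) / (x₁ - x₀)) * x₀ + (x - x₀) / (x₁ - x₀) * x₁ = x := by
    field_simp; ring
  have hKd : 0 < K * (x₁ - x₀) ^ 2 := by positivity
  simp only [sigmaR, if_pos hKd, e1, e2, e3] at hc
  rw [div_mul_eq_mul_div, div_mul_eq_mul_div, ← add_div, div_le_iff₀ hsin] at hc
  rw [mul_comm (√(K / (N - 1))), mul_comm (√(K / (N - 1))), mul_comm (√(K / (N - 1)))]
  linarith

lemma cd_neg_three_aux {K N : ℝ} (hN : 1 < N) (hK : K < 0) {I : Set ℝ} {h : ℝ → ℝ}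
    (hpos : ∀ x ∈ I, 0 < h x) (hIc : I.OrdConnected) (hcd : IsCDDensity K N I h) {x₀ x₁ x : ℝ}
    (h0 : x₀ ∈ I) (h1 : x₁ ∈ I) (hx : x ∈ Set.Ioo x₀ x₁) :
    Real.sinh (√(-K / (N - 1)) * (x₁ - x)) * h x₀ ^ (1 / (N - 1))
      + Real.sinh (√(-K / (N - 1)) * (x - x₀)) * h x₁ ^ (1 / (N - 1))
      ≤ Real.sinh (√(-K / (N - 1)) * (x₁ - x₀)) * h x ^ (1 / (N - 1)) := by
  have h01 : x₀ < x₁ := hx.1.trans hx.2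
  have hd : 0 < x₁ - x₀ := sub_pos.2 h01
  have hn : 0 < N - 1 := by linarith
  have ha : 0 < √(-K / (N - 1)) := Real.sqrt_pos.2 (div_pos (by linarith) hn)
  have hsin : 0 < Real.sinh ((x₁ - x₀) * √(-K / (N - 1))) :=
    Real.sinh_pos_iff.2 (by positivity)
  have ht : (x - x₀) / (x₁ - x₀) ∈ Set.Icc (0:ℝ) 1 :=
    ⟨div_nonneg (by linarith [hx.1]) hd.le, (div_le_one hd).2 (by linarith [hx.2])⟩
  have hc := (cd_extract_aux hN hpos hIc hcd h0 h1 h01 ht).2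
  have e1 : (1 - (x - x₀) / (x₁ - x₀)) * (x₁ - x₀) = x₁ - x := by field_simp; ring
  have e2 : (x - x₀) / (x₁ - x₀) * (x₁ - x₀) = x - x₀ := by field_simp
  have e3 : (1 - (x - x₀) / (x₁ - x₀)) * x₀ + (x - x₀) / (x₁ - x₀) * x₁ = x := by
    field_simp; ring
  have hKd : K * (x₁ - x₀) ^ 2 < 0 := mul_neg_of_neg_of_pos hK (by positivity)
  have hor : ¬ (K * (x₁ - x₀) ^ 2 = 0 ∨ N - 1 = 0) := by
    rintro (hh | hh) <;> linarith
  simp only [sigmaR, if_neg (not_lt.2 hKd.le), if_neg hor, e1, e2, e3] at hc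
  rw [div_mul_eq_mul_div, div_mul_eq_mul_div, ← add_div, div_le_iff₀ hsin] at hc
  rw [mul_comm (√(-K / (N - 1))), mul_comm (√(-K / (N - 1))), mul_comm (√(-K / (N - 1)))]
  linarith

lemma cd_concave_aux {K N : ℝ} (hN : 1 < N) (hK : 0 ≤ K) {I : Set ℝ} {h : ℝ → ℝ}
    (hpos : ∀ x ∈ I, 0 < h x) (hIc : I.OrdConnected) (hcd : IsCDDensity K N I h) :
    ConcaveOn ℝ I (fun x => h x ^ (1 / (N - 1))) := by
  refine LinearOrder.concaveOn_of_lt hIc.convex ?_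
  intro x₀ h0 x₁ h1 h01 p q hp hq hpq
  have hp' : p = 1 - q := by linarith
  subst hp'
  have hq1 : q ∈ Set.Icc (0:ℝ) 1 := ⟨hq.le, by linarith⟩
  have hc := (cd_extract_aux hN hpos hIc hcd h0 h1 h01 hq1).2
  simp only [smul_eq_mul]
  have f0 : 0 < h x₀ ^ (1 / (N - 1)) := Real.rpow_pos_of_pos (hpos _ h0) _
  have f1 : 0 < h x₁ ^ (1 / (N - 1)) := Real.rpow_pos_of_pos (hpos _ h1) _
  have hd : 0 < x₁ - x₀ := sub_pos.2 h01
  have hn : 0 < N - 1 := by linarith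
  have key : ∀ t ∈ Set.Icc (0:ℝ) 1, t ≤ sigmaR K (N - 1) t (x₁ - x₀) := by
    intro t ht
    rcases hK.eq_or_lt with rfl | hK
    · simp [sigmaR]
    have hKd : 0 < K * (x₁ - x₀) ^ 2 := by positivity
    have hpi := cd_sin_aux hN hK hpos hIc hcd h0 h1 h01
    have ha : 0 < √(K / (N - 1)) := Real.sqrt_pos.2 (by positivity)
    have hal : 0 < (x₁ - x₀) * √(K / (N - 1)) := by positivity
    have hsin := Real.sin_pos_of_pos_of_lt_pi hal hpi
    simp only [sigmaR, if_pos hKd]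
    rw [le_div_iff₀ hsin, mul_assoc]
    have := strictConcaveOn_sin_Icc.concaveOn.2
      (show (0:ℝ) ∈ Set.Icc 0 Real.pi from ⟨le_rfl, Real.pi_pos.le⟩)
      (show (x₁ - x₀) * √(K / (N - 1)) ∈ Set.Icc 0 Real.pi from ⟨hal.le, hpi.le⟩)
      (show 0 ≤ 1 - t by linarith [ht.2]) ht.1 (by ring)
    simpa using this
  have k1 := key q hq1
  have k2 := key (1 - q) ⟨hp.le, by linarith⟩
  nlinarith

open Set in
lemma cd_neg_concave_aux {a : ℝ} (ha : 0 < a) {I : Set ℝ} {f : ℝ → ℝ} (hIc : I.OrdConnected)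
    (h3 : ∀ x₀ ∈ I, ∀ x₁ ∈ I, ∀ x ∈ Ioo x₀ x₁,
      Real.sinh (a * (x₁ - x)) * f x₀ + Real.sinh (a * (x - x₀)) * f x₁
        ≤ Real.sinh (a * (x₁ - x₀)) * f x) :
    ConcaveOn ℝ (Ioi 0 ∩ (fun s => Real.log s / (2 * a)) ⁻¹' I)
      (fun s => f (Real.log s / (2 * a)) * Real.exp (Real.log s / 2)) := by
  have h2a : 0 < 2 * a := by positivity
  refine LinearOrder.concaveOn_of_lt (OrdConnected.convex ?_) ?_
  · refine ⟨?_⟩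
    rintro s ⟨hs, hsI⟩ t ⟨ht, htI⟩ u hu
    have hs' : 0 < s := hs
    have hu0 : 0 < u := hs'.trans_le hu.1
    refine ⟨hu0, hIc.out hsI htI ⟨?_, ?_⟩⟩
    · have := Real.log_le_log hs' hu.1
      simp only; gcongr
    · have := Real.log_le_log hu0 hu.2
      simp only; gcongr
  rintro s₀ ⟨hs0, hI0⟩ s₁ ⟨hs1, hI1⟩ h01 p q hp hq hpq
  have hs0' : 0 < s₀ := hs0
  have hs1' : 0 < s₁ := hs1
  simp only [smul_eq_mul]
  set s := p * s₀ + q * s₁ with hs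
  have hp' : p = 1 - q := by linarith
  have hl : s₀ < s := by rw [hs, hp']; nlinarith
  have hr : s < s₁ := by rw [hs]; have : q = 1 - p := by linarith
                         rw [this]; nlinarith
  have hspos : 0 < s := hs0'.trans hl
  have key : ∀ u : ℝ, 0 < u → Real.exp (Real.log u / 2) ^ 2 = u := by
    intro u hu
    rw [← Real.exp_nat_mul, show ((2:ℕ):ℝ) * (Real.log u / 2) = Real.log u by push_cast; ring,
      Real.exp_log hu]
  have hsh : ∀ u v : ℝ, 0 < u → 0 < v →
      2 * Real.sinh (a * (Real.log u / (2 * a) - Real.log v / (2 * a)))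
        * (Real.exp (Real.log u / 2) * Real.exp (Real.log v / 2)) = u - v := by
    intro u v hu hv
    have e : a * (Real.log u / (2 * a) - Real.log v / (2 * a)) = Real.log u / 2 - Real.log v / 2 := by
      field_simp
    rw [e, Real.sinh_eq, neg_sub, Real.exp_sub, Real.exp_sub]
    have p1 := Real.exp_pos (Real.log u / 2)
    have p2 := Real.exp_pos (Real.log v / 2)
    conv_rhs => rw [← key u hu, ← key v hv]
    field_simp
  have hx : Real.log s / (2 * a) ∈ Ioo (Real.log s₀ / (2 * a)) (Real.log s₁ / (2 * a)) := by
    constructor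
    · have := Real.log_lt_log hs0' hl; gcongr
    · have := Real.log_lt_log hspos hr; gcongr
  have h := h3 _ hI0 _ hI1 _ hx
  have k1 := hsh s₁ s hs1' hspos
  have k2 := hsh s s₀ hspos hs0'
  have k3 := hsh s₁ s₀ hs1' hs0'
  have p0 := Real.exp_pos (Real.log s₀ / 2)
  have p1 := Real.exp_pos (Real.log s₁ / 2)
  have p2 := Real.exp_pos (Real.log s / 2)
  set E0 := Real.exp (Real.log s₀ / 2)
  set E1 := Real.exp (Real.log s₁ / 2)
  set E := Real.exp (Real.log s / 2)
  have hm := mul_le_mul_of_nonneg_left h (show 0 ≤ 2 * (E0 * E1 * E) by positivity)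
  have h4 : (s₁ - s) * (f (Real.log s₀ / (2 * a)) * E0) + (s - s₀) * (f (Real.log s₁ / (2 * a)) * E1)
      ≤ (s₁ - s₀) * (f (Real.log s / (2 * a)) * E) := by
    rw [← k1, ← k2, ← k3]
    linarith
  have e1 : s₁ - s = (s₁ - s₀) * p := by rw [hs, hp']; ring
  have e2 : s - s₀ = (s₁ - s₀) * q := by rw [hs, hp']; ring
  rw [e1, e2] at h4
  refine le_of_mul_le_mul_left ?_ (sub_pos.2 h01)
  linarith

open Set in
lemma cd_regular_aux {K N : ℝ} (hN : 1 < N) {I : Set ℝ} (hI : IsOpen I) {h : ℝ → ℝ}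
    (hpos : ∀ x ∈ I, 0 < h x) (hIc : I.OrdConnected) (hcd : IsCDDensity K N I h) :
    ContinuousOn (fun x => h x ^ (1 / (N - 1))) I ∧
    (I \ {x | DifferentiableAt ℝ (fun x => h x ^ (1 / (N - 1))) x}).Countable := by
  rcases le_or_gt 0 K with hK | hK
  · have hc := cd_concave_aux hN hK hpos hIc hcd
    refine ⟨hc.continuousOn hI, ?_⟩
    refine (convex_countable_aux hI hc.neg).mono ?_
    rintro x ⟨hx, hn⟩
    exact ⟨hx, fun hd => hn (by simpa using DifferentiableAt.neg hd)⟩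
  · have ha : 0 < √(-K / (N - 1)) := Real.sqrt_pos.2 (div_pos (by linarith) (by linarith))
    set a := √(-K / (N - 1)) with hadef
    set f := fun x => h x ^ (1 / (N - 1)) with hf
    have hc := cd_neg_concave_aux (f := f) ha hIc
      (fun x₀ h0 x₁ h1 x hx => cd_neg_three_aux hN hK hpos hIc hcd h0 h1 hx)
    set J := Ioi 0 ∩ (fun s => Real.log s / (2 * a)) ⁻¹' I with hJdef
    set F := fun s => f (Real.log s / (2 * a)) * Real.exp (Real.log s / 2) with hF
    have hJ : IsOpen J := by
      refine ContinuousOn.isOpen_inter_preimage ?_ isOpen_Ioi hI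
      exact (Real.continuousOn_log.mono (fun s hs => (ne_of_gt hs))).div_const _
    have hfF : f = fun x => F (Real.exp (2 * a * x)) * Real.exp (-(a * x)) := by
      funext x
      simp only [hF, Real.log_exp]
      rw [mul_assoc, ← Real.exp_add]
      have e1 : 2 * a * x / (2 * a) = x := by field_simp
      have e2 : 2 * a * x / 2 + -(a * x) = 0 := by ring
      rw [e1, e2, Real.exp_zero, mul_one]
    have hmap : MapsTo (fun x => Real.exp (2 * a * x)) I J := by
      intro x hx
      refine ⟨Real.exp_pos _, ?_⟩
      simp only [mem_preimage, Real.log_exp]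
      have e1 : 2 * a * x / (2 * a) = x := by field_simp
      rwa [e1]
    constructor
    · rw [hfF]
      refine ContinuousOn.mul ?_ (by fun_prop)
      exact (hc.continuousOn hJ).comp (by fun_prop) hmap
    · have hcnt := convex_countable_aux hJ hc.neg
      have hinj : Function.Injective (fun x => Real.exp (2 * a * x)) := by
        intro x y hxy
        have := Real.exp_injective hxy
        exact mul_left_cancel₀ (by positivity) this
      refine (hcnt.preimage hinj).mono ?_
      rintro x ⟨hx, hn⟩
      refine ⟨hmap hx, fun hd => hn ?_⟩
      have hd' : DifferentiableAt ℝ F (Real.exp (2 * a * x)) := by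
        simpa using DifferentiableAt.neg hd
      show DifferentiableAt ℝ f x
      rw [hfF]
      have hd2 : DifferentiableAt ℝ (fun x => Real.exp (2 * a * x)) x := by fun_prop
      exact (DifferentiableAt.comp x hd' hd2).mul (by fun_prop)

lemma cd_model_aux {K N : ℝ} (hN : 1 < N) {I : Set ℝ} {h : ℝ → ℝ}
    (hpos : ∀ x ∈ I, 0 < h x) (hIc : I.OrdConnected) (hcd : IsCDDensity K N I h) :
    ∃ (S C : ℝ → ℝ) (δ : ℝ), 0 < δ ∧ (∀ θ, HasDerivAt S (C θ) θ) ∧ ContinuousAt C 0 ∧ S 0 = 0 ∧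
      C 0 = 1 ∧ (∀ θ, C θ ^ 2 + K / (N - 1) * S θ ^ 2 = 1) ∧
      (∀ θ, 0 < θ → θ < δ → 0 < S θ) ∧ (∀ θ, 0 < θ → θ < δ → 0 < C θ) ∧
      ∀ x₀ ∈ I, ∀ x₁ ∈ I, ∀ x ∈ Set.Ioo x₀ x₁,
        S (x₁ - x) * h x₀ ^ (1 / (N - 1)) + S (x - x₀) * h x₁ ^ (1 / (N - 1))
          ≤ S (x₁ - x₀) * h x ^ (1 / (N - 1)) := by
  have hn : 0 < N - 1 := by linarith
  rcases lt_trichotomy K 0 with hK | hK | hK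
  · have hpos' : 0 < -K / (N - 1) := div_pos (by linarith) hn
    have ha : 0 < √(-K / (N - 1)) := Real.sqrt_pos.2 hpos'
    have hsq : √(-K / (N - 1)) ^ 2 = -K / (N - 1) := Real.sq_sqrt hpos'.le
    have h3 := fun x₀ h0 x₁ h1 x hx => cd_neg_three_aux (x₀ := x₀) (x₁ := x₁) (x := x)
      hN hK hpos hIc hcd h0 h1 hx
    set a := √(-K / (N - 1)) with hadef
    refine ⟨fun θ => Real.sinh (a * θ) / a, fun θ => Real.cosh (a * θ), 1, one_pos, ?_, ?_, by simp,
      by simp, ?_, ?_, ?_, ?_⟩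
    · intro θ
      have := (((hasDerivAt_id θ).const_mul a).sinh).div_const a
      simpa [ha.ne'] using this
    · exact (by fun_prop : Continuous fun θ => Real.cosh (a * θ)).continuousAt
    · intro θ
      have e : K / (N - 1) = - a ^ 2 := by rw [hsq]; ring
      rw [e, div_pow, Real.cosh_sq]; field_simp; ring
    · intro θ h1 _
      exact div_pos (Real.sinh_pos_iff.2 (by positivity)) ha
    · intro θ _ _
      exact Real.cosh_pos _
    · intro x₀ h0 x₁ h1 x hx
      have := div_le_div_of_nonneg_right (h3 x₀ h0 x₁ h1 x hx) ha.le
      calc _ = _ := by ring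
        _ ≤ _ := this
        _ = _ := by ring
  · subst hK
    refine ⟨fun θ => θ, fun θ => 1, 1, one_pos, fun θ => hasDerivAt_id θ, continuousAt_const, rfl,
      rfl, by simp, fun θ h1 _ => h1, fun _ _ _ => one_pos, ?_⟩
    intro x₀ h0 x₁ h1 x hx
    have hd : 0 < x₁ - x₀ := sub_pos.2 (hx.1.trans hx.2)
    have hc := (cd_concave_aux hN le_rfl hpos hIc hcd).2 h0 h1
      (show 0 ≤ (x₁ - x) / (x₁ - x₀) from div_nonneg (by linarith [hx.2]) hd.le)
      (show 0 ≤ (x - x₀) / (x₁ - x₀) from div_nonneg (by linarith [hx.1]) hd.le)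
      (by field_simp; ring)
    have e3 : (x₁ - x) / (x₁ - x₀) * x₀ + (x - x₀) / (x₁ - x₀) * x₁ = x := by
      field_simp; ring
    simp only [smul_eq_mul, e3] at hc
    rw [div_mul_eq_mul_div, div_mul_eq_mul_div, ← add_div, div_le_iff₀ hd] at hc
    simp only; linarith
  · have hpos' : 0 < K / (N - 1) := div_pos (by linarith) hn
    have ha : 0 < √(K / (N - 1)) := Real.sqrt_pos.2 hpos'
    have hsq : √(K / (N - 1)) ^ 2 = K / (N - 1) := Real.sq_sqrt hpos'.le
    have h3 := fun x₀ h0 x₁ h1 x hx => cd_pos_three_aux (x₀ := x₀) (x₁ := x₁) (x := x)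
      hN hK hpos hIc hcd h0 h1 hx
    set a := √(K / (N - 1)) with hadef
    have hpi := Real.pi_pos
    refine ⟨fun θ => Real.sin (a * θ) / a, fun θ => Real.cos (a * θ), Real.pi / 2 / a,
      by positivity, ?_, ?_, by simp, by simp, ?_, ?_, ?_, ?_⟩
    · intro θ
      have := (((hasDerivAt_id θ).const_mul a).sin).div_const a
      simpa [ha.ne'] using this
    · exact (by fun_prop : Continuous fun θ => Real.cos (a * θ)).continuousAt
    · intro θ
      rw [← hsq, div_pow, Real.cos_sq']; field_simp; ring
    · intro θ h1 h2
      rw [lt_div_iff₀ ha] at h2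
      exact div_pos (Real.sin_pos_of_pos_of_lt_pi (by positivity) (by linarith)) ha
    · intro θ h1 h2
      rw [lt_div_iff₀ ha] at h2
      have : 0 < a * θ := by positivity
      exact Real.cos_pos_of_mem_Ioo ⟨by linarith, by linarith⟩
    · intro x₀ h0 x₁ h1 x hx
      have := div_le_div_of_nonneg_right (h3 x₀ h0 x₁ h1 x hx) ha.le
      calc _ = _ := by ring
        _ ≤ _ := this
        _ = _ := by ring

theorem cd_density_integrated_riccati (K N : ℝ) (hN : 1 < N)
    (I : Set ℝ) (hIopen : IsOpen I) (hIconn : I.OrdConnected)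
    (h : ℝ → ℝ) (hpos : ∀ x ∈ I, 0 < h x) (hcd : IsCDDensity K N I h) :
    (I \ {x | DifferentiableAt ℝ h x}).Countable ∧
    ∀ x ∈ I, ∀ y ∈ I, DifferentiableAt ℝ h x → DifferentiableAt ℝ h y → x < y →
      IntervalIntegrable (fun s => (deriv h s / h s) ^ 2) volume x y ∧
      K * (y - x) + (1 / (N - 1)) * ∫ s in x..y, (deriv h s / h s) ^ 2
        ≤ deriv h x / h x - deriv h y / h y := by
  have hn : 0 < N - 1 := by linarith
  obtain ⟨hcont, hcnt⟩ := cd_regular_aux hN hIopen hpos hIconn hcd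
  have hback : ∀ x ∈ I, (h x ^ (1 / (N - 1))) ^ (N - 1) = h x := by
    intro x hx
    rw [← Real.rpow_mul (hpos x hx).le, one_div_mul_cancel hn.ne', Real.rpow_one]
  have hfp : ∀ x ∈ I, 0 < h x ^ (1 / (N - 1)) := fun x hx => Real.rpow_pos_of_pos (hpos x hx) _
  have hD : (I \ {x | DifferentiableAt ℝ h x}).Countable := by
    refine hcnt.mono ?_
    rintro x ⟨hx, hnd⟩
    refine ⟨hx, fun hd => hnd ?_⟩
    have hd' : DifferentiableAt ℝ (fun x => h x ^ (1 / (N - 1))) x := hd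
    have h2 : DifferentiableAt ℝ (fun x => (h x ^ (1 / (N - 1))) ^ (N - 1)) x :=
      hd'.rpow_const (Or.inl (hfp x hx).ne')
    refine h2.congr_of_eventuallyEq ?_
    filter_upwards [hIopen.mem_nhds hx] with z hz
    exact (hback z hz).symm
  refine ⟨hD, ?_⟩
  intro x hx y hy hdx hdy hxy
  have hhcont : ContinuousOn h I := by
    have h2 : ContinuousOn (fun x => (h x ^ (1 / (N - 1))) ^ (N - 1)) I :=
      hcont.rpow_const (fun x hx => Or.inl (hfp x hx).ne')
    exact h2.congr (fun z hz => (hback z hz).symm)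
  obtain ⟨S, C, δ, hδ, hS, hCc, hS0, hC0, hCS, hSp, hCp, h3⟩ :=
    cd_model_aux hN hpos hIconn hcd
  set g : ℝ → ℝ := fun s => (1 / (N - 1)) * (deriv h s / h s) with hg
  have hfd : ∀ a ∈ I, DifferentiableAt ℝ h a →
      HasDerivAt (fun x => h x ^ (1 / (N - 1))) (h a ^ (1 / (N - 1)) * g a) a := by
    intro a ha hd
    have h1 := hd.hasDerivAt.rpow_const (p := 1 / (N - 1)) (Or.inl (hpos a ha).ne')
    rw [Real.rpow_sub_one (hpos a ha).ne'] at h1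
    convert h1 using 1
    simp only [hg]; ring
  have hR : ∀ a ∈ I, ∀ b ∈ I, DifferentiableAt ℝ h a → a < b →
      h b ^ (1 / (N - 1)) ≤ h a ^ (1 / (N - 1)) * (C (b - a) + S (b - a) * g a) := by
    intro a ha b hb hd hab
    have := tangent_right_aux hS hS0 hC0 hab (hfd a ha hd) (fun z hz => h3 a ha b hb z hz)
    linarith
  have hLf : ∀ a ∈ I, ∀ b ∈ I, DifferentiableAt ℝ h b → a < b →
      h a ^ (1 / (N - 1)) ≤ h b ^ (1 / (N - 1)) * (C (b - a) - S (b - a) * g b) := by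
    intro a ha b hb hd hab
    have := tangent_left_aux hS hS0 hC0 hab (hfd b hb hd) (fun z hz => h3 a ha b hb z hz)
    linarith
  have hmeas : AEStronglyMeasurable g (volume.restrict (Set.uIoc x y)) := by
    have hsub : Set.uIoc x y ⊆ I := by
      rw [Set.uIoc_of_le hxy.le]
      exact Set.Ioc_subset_Icc_self.trans (hIconn.out hx hy)
    have m1 : AEStronglyMeasurable h (volume.restrict (Set.uIoc x y)) :=
      (hhcont.mono hsub).aestronglyMeasurable measurableSet_uIoc
    have m2 : AEMeasurable (fun s => (1 / (N - 1)) * (deriv h s / h s))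
        (volume.restrict (Set.uIoc x y)) :=
      ((measurable_deriv h).aemeasurable.div m1.aemeasurable).const_mul _
    exact m2.aestronglyMeasurable
  obtain ⟨hint, hle⟩ := riccati_core_aux (κ := K / (N - 1)) (D := {x | DifferentiableAt ℝ h x})
    (g := g) hIopen hIconn hD hδ hS hCc hS0 hC0 hSp hCp
    (by
      intro a ha b hb hd hab _
      have h1 := (hfp b hb).trans_le (hR a ha b hb hd hab)
      have := (pos_iff_pos_of_mul_pos h1).1 (hfp a ha)
      linarith)
    (by
      intro a ha b hb hd hab _
      have h1 := (hfp a ha).trans_le (hLf a ha b hb hd hab)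
      have := (pos_iff_pos_of_mul_pos h1).1 (hfp b hb)
      linarith)
    (by
      intro a ha b hb hda hdb hab hlt
      exact riccati_two_point_aux (hfp a ha) (hfp b hb) (hSp _ (by linarith) hlt) (hCS _)
        (hR a ha b hb hda hab) (hLf a ha b hb hdb hab))
    hx hy hdx hdy hxy hmeas
  have hsq : (fun s => (deriv h s / h s) ^ 2) = fun s => (N - 1) ^ 2 * g s ^ 2 := by
    funext s; simp only [hg]; field_simp
  rw [hsq]
  refine ⟨hint.const_mul _, ?_⟩
  rw [intervalIntegral.integral_const_mul]
  have e : ∀ s, deriv h s / h s = (N - 1) * g s := by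
    intro s; simp only [hg]; field_simp
  rw [e x, e y]
  have := mul_le_mul_of_nonneg_left hle hn.le
  calc _ = (N - 1) * (K / (N - 1) * (y - x) + ∫ s in x..y, g s ^ 2) := by field_simp
    _ ≤ _ := this
    _ = _ := by ring
end
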